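/- arXiv:2109.05768 — 6 statements merged into one kernel-verified Lean document; each statement's English description precedes it below -/
import Mathlib

section
/- Let Σ, Λ be n×n real symmetric positive semidefinite matrices with eigenvalue matrices D = diag(d₁,…,d_n) and Δ = diag(δ₁,…,δ_n) ordered increasingly, and assume Σ has at least two distinct eigenvalues; set m = min{(λ − μ)² : λ ≠ μ are eigenvalues of Σ}. Then for every Q ∈ O(n) with Λ = QΔQᵀ, there exists P ∈ O(n) with Σ = PDPᵀ and ‖P − Q‖_F² ≤ 4·√(n/m)·‖Σ − Λ‖_F. -/
open Matrix Finset

/-- Frobenius norm of a real matrix. -/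
noncomputable def frobNorm {n : ℕ} (A : Matrix (Fin n) (Fin n) ℝ) : ℝ :=
  Real.sqrt (∑ i, ∑ j, (A i j) ^ 2)

/-!
Write `W = star P₀ * Q`. The matrix of squared moduli of `W` is doubly stochastic, so Birkhoff's
theorem and the rearrangement inequality bound `∑ (d i - d j) ^ 2 * ‖W i j‖ ^ 2` by
`4 * ‖A - B‖ ^ 2`. Hence the part of `W` that mixes different eigenspaces of `diagonal d` is small.
A singular value decomposition of each diagonal block of `W` then yields a block-diagonal unitary
`R` close to `W`. Since `R` commutes with `diagonal d`, the matrix `P₀ * R` still diagonalizes `A`.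
-/

section

open scoped Matrix.Norms.Frobenius

variable {𝕜 α ι κ : Type*} [RCLike 𝕜]

section Frobenius

variable {μ ν : Type*} [Fintype μ] [Fintype ν]

lemma frobenius_norm_sq_eq_sum [SeminormedAddCommGroup α] (A : Matrix μ ν α) :
    ‖A‖ ^ 2 = ∑ i, ∑ j, ‖A i j‖ ^ 2 := by
  have hsum : 0 ≤ ∑ i, ∑ j, ‖A i j‖ ^ 2 := by positivity
  simp only [frobenius_norm_def, Real.rpow_two, ← Real.sqrt_eq_rpow, Real.sq_sqrt hsum]

lemma frobenius_norm_submatrix_equiv [SeminormedAddCommGroup α] {μ' ν' : Type*} [Fintype μ']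
    [Fintype ν'] (A : Matrix μ ν α) (e₁ : μ' ≃ μ) (e₂ : ν' ≃ ν) :
    ‖A.submatrix e₁ e₂‖ = ‖A‖ := by
  simp only [frobenius_norm_def, submatrix_apply]
  rw [← Equiv.sum_comp e₁]
  congr 1
  exact sum_congr rfl fun i _ ↦ Equiv.sum_comp e₂ fun j ↦ ‖A (e₁ i) j‖ ^ (2 : ℝ)

lemma frobenius_norm_sq_eq_trace (A : Matrix μ ν 𝕜) : (‖A‖ ^ 2 : 𝕜) = trace (Aᴴ * A) := by
  rw [← RCLike.ofReal_pow, frobenius_norm_sq_eq_sum, Finset.sum_comm]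
  simp [trace, mul_apply, RCLike.conj_mul]

lemma frobenius_norm_unitary_mul [DecidableEq μ] {U : Matrix μ μ 𝕜}
    (hU : U ∈ unitaryGroup μ 𝕜) (A : Matrix μ ν 𝕜) : ‖U * A‖ = ‖A‖ := by
  have htrace : trace ((U * A)ᴴ * (U * A)) = trace (Aᴴ * A) := by
    rw [conjTranspose_mul, Matrix.mul_assoc, ← Matrix.mul_assoc Uᴴ, ← star_eq_conjTranspose U,
      mem_unitaryGroup_iff'.1 hU, Matrix.one_mul]
  rw [← frobenius_norm_sq_eq_trace, ← frobenius_norm_sq_eq_trace] at htrace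
  exact (pow_left_inj₀ (norm_nonneg _) (norm_nonneg _) two_ne_zero).1 (mod_cast htrace)

lemma frobenius_norm_mul_unitary [DecidableEq ν] {V : Matrix ν ν 𝕜}
    (hV : V ∈ unitaryGroup ν 𝕜) (A : Matrix μ ν 𝕜) : ‖A * V‖ = ‖A‖ := by
  rw [← frobenius_norm_conjTranspose, conjTranspose_mul,
    ← star_eq_conjTranspose V,
    frobenius_norm_unitary_mul (Unitary.star_mem hV), frobenius_norm_conjTranspose]

end Frobenius

section DoublyStochastic

variable [Fintype ι]

lemma sum_sub_sq_le_sum_sub_comp_perm_sq {d δ : ι → ℝ} (hdδ : Monovary d δ) (σ : Equiv.Perm ι) :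
    ∑ i, (d i - δ i) ^ 2 ≤ ∑ i, (d i - δ (σ i)) ^ 2 := by
  have hrearrange : ∑ i, d i * δ (σ i) ≤ ∑ i, d i * δ i := hdδ.sum_mul_comp_perm_le_sum_mul
  have hperm : ∑ i, δ (σ i) ^ 2 = ∑ i, δ i ^ 2 := Equiv.sum_comp σ fun i ↦ δ i ^ 2
  simp only [sub_sq, sum_add_distrib, sum_sub_distrib, mul_assoc, ← mul_sum]
  linarith

variable [DecidableEq ι]

lemma le_sum_mul_of_mem_doublyStochastic {M : Matrix ι ι ℝ} (hM : M ∈ doublyStochastic ℝ ι)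
    {cost : ι → ι → ℝ} {c : ℝ} (hc : ∀ σ : Equiv.Perm ι, c ≤ ∑ i, cost i (σ i)) :
    c ≤ ∑ i, ∑ j, cost i j * M i j := by
  have hlin : IsLinearMap ℝ fun N : Matrix ι ι ℝ ↦ ∑ i, ∑ j, cost i j * N i j :=
    ⟨fun N N' ↦ by simp [mul_add, sum_add_distrib],
      fun t N ↦ by simp [mul_sum, mul_left_comm]⟩
  rw [← SetLike.mem_coe, doublyStochastic_eq_convexHull_permMatrix] at hM
  refine convexHull_min ?_ (convex_halfSpace_ge hlin c) hM
  rintro _ ⟨σ, rfl⟩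
  simpa [Equiv.Perm.permMatrix, PEquiv.toMatrix_apply, eq_comm] using hc σ

lemma sum_sub_sq_mul_le_of_mem_doublyStochastic {M : Matrix ι ι ℝ}
    (hM : M ∈ doublyStochastic ℝ ι) {d δ : ι → ℝ} (hdδ : Monovary d δ) :
    ∑ i, ∑ j, (d i - d j) ^ 2 * M i j ≤ 4 * ∑ i, ∑ j, (d i - δ j) ^ 2 * M i j := by
  have hpaired : ∑ i, ∑ j, (d j - δ j) ^ 2 * M i j = ∑ j, (d j - δ j) ^ 2 := by
    rw [sum_comm]
    simp only [← mul_sum, sum_col_of_mem_doublyStochastic hM, mul_one]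
  have hmin : ∑ j, (d j - δ j) ^ 2 ≤ ∑ i, ∑ j, (d i - δ j) ^ 2 * M i j :=
    le_sum_mul_of_mem_doublyStochastic hM (sum_sub_sq_le_sum_sub_comp_perm_sq hdδ)
  have hpoint (i j : ι) : (d i - d j) ^ 2 ≤ 2 * (d i - δ j) ^ 2 + 2 * (d j - δ j) ^ 2 := by
    linarith [sq_nonneg ((d i - δ j) + (d j - δ j))]
  calc ∑ i, ∑ j, (d i - d j) ^ 2 * M i j
      ≤ ∑ i, ∑ j, (2 * (d i - δ j) ^ 2 + 2 * (d j - δ j) ^ 2) * M i j := by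
        gcongr with i _ j _
        · exact nonneg_of_mem_doublyStochastic hM
        · exact hpoint i j
    _ = 2 * ∑ i, ∑ j, (d i - δ j) ^ 2 * M i j + 2 * ∑ i, ∑ j, (d j - δ j) ^ 2 * M i j := by
        simp only [add_mul, sum_add_distrib, mul_assoc, mul_sum]
    _ ≤ 4 * ∑ i, ∑ j, (d i - δ j) ^ 2 * M i j := by linarith

lemma map_norm_sq_mem_doublyStochastic {U : Matrix ι ι 𝕜} (hU : U ∈ unitaryGroup ι 𝕜) :
    (U.map fun z ↦ ‖z‖ ^ 2) ∈ doublyStochastic ℝ ι := by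
  refine mem_doublyStochastic_iff_sum.2 ⟨fun i j ↦ sq_nonneg _, fun i ↦ ?_, fun j ↦ ?_⟩
  · have hrow := congr_fun₂ (mem_unitaryGroup_iff.1 hU) i i
    simp only [mul_apply, star_apply, RCLike.star_def, RCLike.mul_conj, one_apply_eq] at hrow
    exact_mod_cast hrow
  · have hcol := congr_fun₂ (mem_unitaryGroup_iff'.1 hU) j j
    simp only [mul_apply, star_apply, RCLike.star_def, RCLike.conj_mul, one_apply_eq] at hcol
    exact_mod_cast hcol

end DoublyStochastic

section SVD

variable [Fintype ι]

lemma exists_orthonormalBasis_eq_norm_smul {E : Type*} [NormedAddCommGroup E]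
    [InnerProductSpace 𝕜 E] [FiniteDimensional 𝕜 E] (hcard : Module.finrank 𝕜 E = Fintype.card ι)
    {v : ι → E} (hv : Pairwise fun i j ↦ inner 𝕜 (v i) (v j) = 0) :
    ∃ b : OrthonormalBasis ι 𝕜 E, ∀ i, v i = (‖v i‖ : 𝕜) • b i := by
  have hortho : Orthonormal 𝕜 ({i | v i ≠ 0}.domRestrict fun i ↦ (‖v i‖⁻¹ : 𝕜) • v i) := by
    refine ⟨fun i ↦ norm_smul_inv_norm i.2, fun i j hij ↦ ?_⟩
    simp [Set.domRestrict_apply, inner_smul_left, inner_smul_right, hv (Subtype.coe_ne_coe.2 hij)]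
  obtain ⟨b, hb⟩ := hortho.exists_orthonormalBasis_extension_of_card_eq hcard
  refine ⟨b, fun i ↦ ?_⟩
  by_cases hi : v i = 0
  · simp [hi]
  · have hnorm : (‖v i‖ : 𝕜) ≠ 0 := by simpa using hi
    rw [hb i hi, smul_inv_smul₀ hnorm]

variable [DecidableEq ι]

lemma exists_unitary_star_mul_eq_diagonal_of_isDiag {B : Matrix ι ι 𝕜} (hB : (Bᴴ * B).IsDiag) :
    ∃ U ∈ unitaryGroup ι 𝕜, ∃ σ : ι → ℝ, (∀ i, 0 ≤ σ i) ∧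
      star U * B = diagonal fun i ↦ (σ i : 𝕜) := by
  let col (j : ι) : EuclideanSpace 𝕜 ι := WithLp.toLp 2 (Bᵀ j)
  have hcol : Pairwise fun i j ↦ inner 𝕜 (col i) (col j) = 0 := fun i j hij ↦
    (inner_matrix_col_col B B i j).trans (hB hij)
  obtain ⟨b, hb⟩ := exists_orthonormalBasis_eq_norm_smul (by simp) hcol
  let U := (EuclideanSpace.basisFun ι 𝕜).toBasis.toMatrix b
  have hU : U ∈ unitaryGroup ι 𝕜 := OrthonormalBasis.toMatrix_orthonormalBasis_mem_unitary _ _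
  have hfactor : B = U * diagonal fun j ↦ (‖col j‖ : 𝕜) := by
    ext i j
    have hentry := congr_arg (· i) (hb j)
    simpa [col, U, mul_comm, Module.Basis.toMatrix_apply, RCLike.real_smul_eq_coe_mul] using hentry
  refine ⟨U, hU, fun j ↦ ‖col j‖, fun j ↦ norm_nonneg _, ?_⟩
  rw [hfactor, ← Matrix.mul_assoc, mem_unitaryGroup_iff'.1 hU, Matrix.one_mul]

lemma exists_unitary_star_mul_mul_eq_diagonal (A : Matrix ι ι 𝕜) :
    ∃ U ∈ unitaryGroup ι 𝕜, ∃ V ∈ unitaryGroup ι 𝕜, ∃ σ : ι → ℝ, (∀ i, 0 ≤ σ i) ∧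
      star U * A * V = diagonal fun i ↦ (σ i : 𝕜) := by
  have hA : (Aᴴ * A).IsHermitian := isHermitian_conjTranspose_mul_self A
  let V : Matrix ι ι 𝕜 := hA.eigenvectorUnitary
  have hAV : ((A * V)ᴴ * (A * V)).IsDiag := by
    have hspectral := hA.conjStarAlgAut_star_eigenvectorUnitary
    rw [Unitary.conjStarAlgAut_star_apply] at hspectral
    rw [conjTranspose_mul, Matrix.mul_assoc, ← Matrix.mul_assoc Aᴴ, ← Matrix.mul_assoc,
      ← star_eq_conjTranspose V, hspectral]
    exact isDiag_diagonal _
  obtain ⟨U, hU, σ, hσ, hUAV⟩ := exists_unitary_star_mul_eq_diagonal_of_isDiag hAV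
  exact ⟨U, hU, V, hA.eigenvectorUnitary.2, σ, hσ, by rw [Matrix.mul_assoc, hUAV]⟩

end SVD

section Blocks

variable [Fintype ι] [DecidableEq κ] [SeminormedAddCommGroup α]

/-- The squared Frobenius mass of `W` outside its diagonal blocks, where the blocks are the fibres
of a labelling `f` of the indices. With `f` the eigenvalues of a diagonal matrix, it measures how
far `W` is from commuting with that matrix. -/
noncomputable def offBlockMass (f : ι → κ) (W : Matrix ι ι α) : ℝ :=
  ∑ i, ∑ j, if f i = f j then 0 else ‖W i j‖ ^ 2

lemma offBlockMass_nonneg (f : ι → κ) (W : Matrix ι ι α) : 0 ≤ offBlockMass f W :=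
  sum_nonneg fun i _ ↦ sum_nonneg fun j _ ↦ by split_ifs <;> positivity

lemma offBlockMass_le_card [DecidableEq ι] (f : ι → κ) {W : Matrix ι ι 𝕜}
    (hW : W ∈ unitaryGroup ι 𝕜) : offBlockMass f W ≤ Fintype.card ι := by
  have hrow (i : ι) : ∑ j, ‖W i j‖ ^ 2 = 1 :=
    sum_row_of_mem_doublyStochastic (map_norm_sq_mem_doublyStochastic hW) i
  calc offBlockMass f W ≤ ∑ i, ∑ j, ‖W i j‖ ^ 2 := by
        unfold offBlockMass
        gcongr with i _ j _
        split_ifs <;> simp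
    _ = Fintype.card ι := by simp [hrow]

lemma offBlockMass_comp_of_injective {κ' : Type*} [DecidableEq κ'] {g : κ → κ'}
    (hg : g.Injective) (f : ι → κ) (W : Matrix ι ι α) :
    offBlockMass (g ∘ f) W = offBlockMass f W := by
  simp only [offBlockMass, Function.comp_apply, hg.eq_iff]

lemma offBlockMass_submatrix_equiv {μ : Type*} [Fintype μ] (f : ι → κ) (W : Matrix ι ι α)
    (e : μ ≃ ι) : offBlockMass (f ∘ e) (W.submatrix e e) = offBlockMass f W := by
  unfold offBlockMass
  rw [← Equiv.sum_comp e]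
  exact sum_congr rfl fun i _ ↦
    Equiv.sum_comp e fun j ↦ if f (e i) = f j then 0 else ‖W (e i) j‖ ^ 2

lemma mul_offBlockMass_le_sum {d : ι → ℝ} {m : ℝ}
    (hgap : ∀ i j, d i ≠ d j → m ≤ (d i - d j) ^ 2) (W : Matrix ι ι α) :
    m * offBlockMass d W ≤ ∑ i, ∑ j, (d i - d j) ^ 2 * ‖W i j‖ ^ 2 := by
  simp only [offBlockMass, mul_sum]
  refine sum_le_sum fun i _ ↦ sum_le_sum fun j _ ↦ ?_
  split_ifs with hij
  · simp [hij]
  · gcongr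
    exact hgap i j hij

lemma norm_one_sub_ofReal_sq_le {s : ℝ} (hs : 0 ≤ s) (hs_le : s ≤ 1) :
    ‖1 - (s : 𝕜)‖ ^ 2 ≤ 1 - ‖(s : 𝕜)‖ ^ 2 := by
  have hnorm_sub : ‖1 - (s : 𝕜)‖ = 1 - s := by
    rw [← RCLike.ofReal_one, ← RCLike.ofReal_sub, RCLike.norm_of_nonneg (sub_nonneg.2 hs_le)]
  rw [hnorm_sub, RCLike.norm_of_nonneg hs]
  linarith [mul_nonneg hs (sub_nonneg.2 hs_le)]

lemma norm_one_sub_sq_le_offBlockMass [DecidableEq ι] (f : ι → κ) {X : Matrix ι ι 𝕜}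
    (hX : X ∈ unitaryGroup ι 𝕜) {σ : ι → ℝ} (hσ : ∀ i, 0 ≤ σ i)
    (hblock : ∀ i j, f i = f j → X i j = diagonal (fun i ↦ (σ i : 𝕜)) i j) :
    ‖1 - X‖ ^ 2 ≤ 2 * offBlockMass f X := by
  have hdiag (i : ι) : ‖(1 - X) i i‖ ^ 2 ≤ 1 - ‖X i i‖ ^ 2 := by
    have hXii : X i i = (σ i : 𝕜) := by rw [hblock i i rfl, diagonal_apply_eq]
    have hσ_le : σ i ≤ 1 := by
      simpa [hXii, abs_of_nonneg (hσ i)] using entry_norm_bound_of_unitary hX i i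
    rw [Matrix.sub_apply, one_apply_eq, hXii]
    exact norm_one_sub_ofReal_sq_le (hσ i) hσ_le
  have hentry (i j : ι) : ‖(1 - X) i j‖ ^ 2 ≤ 2 * (if f i = f j then 0 else ‖X i j‖ ^ 2) +
      (‖(1 : Matrix ι ι 𝕜) i j‖ ^ 2 - ‖X i j‖ ^ 2) := by
    obtain rfl | hij := eq_or_ne i j
    · simpa using hdiag i
    · rw [Matrix.sub_apply, one_apply_ne hij]
      split_ifs with hf
      · simp [hblock i j hf, hij]
      · simp only [zero_sub, norm_neg, norm_zero]
        linarith
  have hnorm : ‖X‖ = ‖(1 : Matrix ι ι 𝕜)‖ := by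
    rw [← frobenius_norm_unitary_mul hX 1, Matrix.mul_one]
  calc ‖1 - X‖ ^ 2
      ≤ ∑ i, ∑ j, (2 * (if f i = f j then 0 else ‖X i j‖ ^ 2) +
          (‖(1 : Matrix ι ι 𝕜) i j‖ ^ 2 - ‖X i j‖ ^ 2)) := by
        rw [frobenius_norm_sq_eq_sum]
        exact sum_le_sum fun i _ ↦ sum_le_sum fun j _ ↦ hentry i j
    _ = 2 * offBlockMass f X + (‖(1 : Matrix ι ι 𝕜)‖ ^ 2 - ‖X‖ ^ 2) := by
        simp only [sum_add_distrib, sum_sub_distrib, ← mul_sum, offBlockMass,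
          frobenius_norm_sq_eq_sum]
    _ = 2 * offBlockMass f X := by rw [hnorm, sub_self, add_zero]

end Blocks

section BlockProducts

variable [NonUnitalNonAssocSemiring α] [Fintype κ] [DecidableEq κ]
  {l m n : κ → Type*} [∀ c, Fintype (m c)]

lemma blockDiag'_blockDiagonal'_mul (A : ∀ c, Matrix (l c) (m c) α)
    (M : Matrix (Σ c, m c) (Σ c, n c) α) (c : κ) :
    blockDiag' (blockDiagonal' A * M) c = A c * blockDiag' M c := by
  ext i j
  simp only [blockDiag'_apply, mul_apply, Fintype.sum_sigma]
  rw [Fintype.sum_eq_single c fun c' hc' ↦ by simp [blockDiagonal'_apply_ne _ _ _ hc'.symm]]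
  simp

lemma blockDiag'_mul_blockDiagonal' (M : Matrix (Σ c, l c) (Σ c, m c) α)
    (B : ∀ c, Matrix (m c) (n c) α) (c : κ) :
    blockDiag' (M * blockDiagonal' B) c = blockDiag' M c * B c := by
  ext i j
  simp only [blockDiag'_apply, mul_apply, Fintype.sum_sigma]
  rw [Fintype.sum_eq_single c fun c' hc' ↦ by simp [blockDiagonal'_apply_ne _ _ _ hc']]
  simp

end BlockProducts

section SigmaBlocks

variable [Fintype κ] [DecidableEq κ] {β : κ → Type*} [∀ c, Fintype (β c)]

lemma offBlockMass_fst_eq_sub [SeminormedAddCommGroup α] (M : Matrix (Σ c, β c) (Σ c, β c) α) :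
    offBlockMass Sigma.fst M = ‖M‖ ^ 2 - ∑ c, ‖blockDiag' M c‖ ^ 2 := by
  have hdiag : ∑ c, ‖blockDiag' M c‖ ^ 2 =
      ∑ x : Σ c, β c, ∑ y : Σ c, β c, if x.1 = y.1 then ‖M x y‖ ^ 2 else 0 := by
    simp only [frobenius_norm_sq_eq_sum, Fintype.sum_sigma, blockDiag'_apply]
    refine sum_congr rfl fun c _ ↦ sum_congr rfl fun i _ ↦ ?_
    rw [Fintype.sum_eq_single c fun c' hc' ↦ by simp [hc'.symm]]
    simp
  rw [hdiag, frobenius_norm_sq_eq_sum, offBlockMass]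
  simp only [← sum_sub_distrib]
  refine sum_congr rfl fun x _ ↦ sum_congr rfl fun y _ ↦ ?_
  split_ifs <;> simp

variable [∀ c, DecidableEq (β c)]

lemma blockDiagonal'_mem_unitaryGroup [CommRing α] [StarRing α]
    {U : ∀ c, Matrix (β c) (β c) α} (hU : ∀ c, U c ∈ unitaryGroup (β c) α) :
    blockDiagonal' U ∈ unitaryGroup (Σ c, β c) α := by
  rw [mem_unitaryGroup_iff, star_eq_conjTranspose, blockDiagonal'_conjTranspose,
    ← blockDiagonal'_mul, ← blockDiagonal'_one]
  exact congr_arg blockDiagonal' (funext fun c ↦ mem_unitaryGroup_iff.1 (hU c))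

lemma offBlockMass_fst_blockDiagonal'_mul_mul {U V : ∀ c, Matrix (β c) (β c) 𝕜}
    (hU : ∀ c, U c ∈ unitaryGroup (β c) 𝕜) (hV : ∀ c, V c ∈ unitaryGroup (β c) 𝕜)
    (W : Matrix (Σ c, β c) (Σ c, β c) 𝕜) :
    offBlockMass Sigma.fst (blockDiagonal' U * W * blockDiagonal' V) =
      offBlockMass Sigma.fst W := by
  simp only [offBlockMass_fst_eq_sub, blockDiag'_mul_blockDiagonal', blockDiag'_blockDiagonal'_mul,
    frobenius_norm_mul_unitary (hV _), frobenius_norm_unitary_mul (hU _),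
    frobenius_norm_mul_unitary (blockDiagonal'_mem_unitaryGroup hV),
    frobenius_norm_unitary_mul (blockDiagonal'_mem_unitaryGroup hU)]

lemma exists_unitary_blockDiagonal'_norm_sub_sq_le {W : Matrix (Σ c, β c) (Σ c, β c) 𝕜}
    (hW : W ∈ unitaryGroup (Σ c, β c) 𝕜) :
    ∃ R : ∀ c, Matrix (β c) (β c) 𝕜, (∀ c, R c ∈ unitaryGroup (β c) 𝕜) ∧
      ‖blockDiagonal' R - W‖ ^ 2 ≤ 2 * offBlockMass Sigma.fst W := by
  choose U hU V hV σ hσ hUWV using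
    fun c ↦ exists_unitary_star_mul_mul_eq_diagonal (blockDiag' W c)
  have hUstar (c : κ) : star (U c) ∈ unitaryGroup (β c) 𝕜 := Unitary.star_mem (hU c)
  have hU' := blockDiagonal'_mem_unitaryGroup hUstar
  have hV' := blockDiagonal'_mem_unitaryGroup hV
  let X := blockDiagonal' (fun c ↦ star (U c)) * W * blockDiagonal' V
  have hX : X ∈ unitaryGroup (Σ c, β c) 𝕜 := mul_mem (mul_mem hU' hW) hV'
  have hblock (x y : Σ c, β c) (hxy : x.1 = y.1) :
      X x y = diagonal (fun x : Σ c, β c ↦ (σ x.1 x.2 : 𝕜)) x y := by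
    obtain ⟨c, i⟩ := x
    obtain ⟨c, j⟩ := y
    obtain rfl : _ = c := hxy
    have hc : blockDiag' X c = diagonal fun i ↦ (σ c i : 𝕜) := by
      rw [blockDiag'_mul_blockDiagonal', blockDiag'_blockDiagonal'_mul, hUWV]
    simpa [blockDiag'_apply, diagonal_apply] using congr_fun₂ hc i j
  refine ⟨fun c ↦ U c * star (V c), fun c ↦ mul_mem (hU c) (Unitary.star_mem (hV c)), ?_⟩
  have hconj : blockDiagonal' (fun c ↦ star (U c)) *
      (blockDiagonal' (fun c ↦ U c * star (V c)) - W) * blockDiagonal' V = 1 - X := by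
    rw [Matrix.mul_sub, Matrix.sub_mul, ← blockDiagonal'_mul, ← blockDiagonal'_mul]
    simp only [← Matrix.mul_assoc, mem_unitaryGroup_iff'.1 (hU _), Matrix.one_mul,
      mem_unitaryGroup_iff'.1 (hV _)]
    rw [← blockDiagonal'_one]
    rfl
  calc ‖blockDiagonal' (fun c ↦ U c * star (V c)) - W‖ ^ 2 = ‖1 - X‖ ^ 2 := by
        rw [← hconj, frobenius_norm_mul_unitary hV', frobenius_norm_unitary_mul hU']
    _ ≤ 2 * offBlockMass Sigma.fst X :=
        norm_one_sub_sq_le_offBlockMass Sigma.fst hX (fun x ↦ hσ x.1 x.2) hblock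
    _ = 2 * offBlockMass Sigma.fst W := by rw [offBlockMass_fst_blockDiagonal'_mul_mul hUstar hV]

end SigmaBlocks

section Labelled

variable [Fintype ι] [DecidableEq ι]

lemma submatrix_equiv_mem_unitaryGroup {μ : Type*} [Fintype μ] [DecidableEq μ] [CommRing α]
    [StarRing α] {U : Matrix ι ι α} (hU : U ∈ unitaryGroup ι α) (e : μ ≃ ι) :
    U.submatrix e e ∈ unitaryGroup μ α := by
  rw [mem_unitaryGroup_iff, star_eq_conjTranspose, conjTranspose_submatrix, submatrix_mul_equiv,
    ← star_eq_conjTranspose, mem_unitaryGroup_iff.1 hU, submatrix_one_equiv]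

lemma exists_unitary_norm_sub_sq_le_offBlockMass [DecidableEq κ] (f : ι → κ) {W : Matrix ι ι 𝕜}
    (hW : W ∈ unitaryGroup ι 𝕜) :
    ∃ R ∈ unitaryGroup ι 𝕜, (∀ i j, f i ≠ f j → R i j = 0) ∧
      ‖R - W‖ ^ 2 ≤ 2 * offBlockMass f W := by
  let g : ι → Set.range f := Set.rangeFactorization f
  let e : (Σ c, {i // g i = c}) ≃ ι := Equiv.sigmaFiberEquiv g
  obtain ⟨R, hR, hRW⟩ :=
    exists_unitary_blockDiagonal'_norm_sub_sq_le (submatrix_equiv_mem_unitaryGroup hW e)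
  refine ⟨(blockDiagonal' R).submatrix e.symm e.symm,
    submatrix_equiv_mem_unitaryGroup (blockDiagonal'_mem_unitaryGroup hR) e.symm,
    fun i j hij ↦ blockDiagonal'_apply_ne R _ _ fun h ↦ hij (congr_arg Subtype.val h), ?_⟩
  have hmass : offBlockMass Sigma.fst (W.submatrix e e) = offBlockMass f W := by
    have hfst : Sigma.fst = g ∘ e := funext fun x ↦ x.2.2.symm
    rw [hfst, offBlockMass_submatrix_equiv,
      ← offBlockMass_comp_of_injective Subtype.val_injective]
    rfl
  rw [← hmass, ← frobenius_norm_submatrix_equiv _ e e, submatrix_sub]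
  simpa using hRW

lemma exists_unitary_commute_diagonal_norm_sub_sq_le (d : ι → ℝ) {W : Matrix ι ι 𝕜}
    (hW : W ∈ unitaryGroup ι 𝕜) :
    ∃ R ∈ unitaryGroup ι 𝕜, Commute R (diagonal fun i ↦ (d i : 𝕜)) ∧
      ‖R - W‖ ^ 2 ≤ 2 * offBlockMass d W := by
  obtain ⟨R, hR, hRd, hRW⟩ := exists_unitary_norm_sub_sq_le_offBlockMass d hW
  refine ⟨R, hR, ?_, hRW⟩
  ext i j
  rw [mul_diagonal, diagonal_mul]
  obtain hij | hij := eq_or_ne (d i) (d j)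
  · rw [hij, mul_comm]
  · rw [hRd i j hij, zero_mul, mul_zero]

end Labelled

section Stability

variable [Fintype ι] [DecidableEq ι]

lemma frobenius_norm_diagonalized_sub_sq {P Q : Matrix ι ι 𝕜}
    (hP : P ∈ unitaryGroup ι 𝕜) (hQ : Q ∈ unitaryGroup ι 𝕜) (d δ : ι → ℝ) :
    ‖P * diagonal (fun i ↦ (d i : 𝕜)) * star P - Q * diagonal (fun i ↦ (δ i : 𝕜)) * star Q‖ ^ 2 =
      ∑ i, ∑ j, (d i - δ j) ^ 2 * ‖(star P * Q) i j‖ ^ 2 := by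
  have hP' := mem_unitaryGroup_iff'.1 hP
  have hQ' := mem_unitaryGroup_iff'.1 hQ
  have hconj : star P * (P * diagonal (fun i ↦ (d i : 𝕜)) * star P -
      Q * diagonal (fun i ↦ (δ i : 𝕜)) * star Q) * Q =
      diagonal (fun i ↦ (d i : 𝕜)) * (star P * Q) - star P * Q * diagonal fun i ↦ (δ i : 𝕜) := by
    simp only [Matrix.mul_sub, Matrix.sub_mul, Matrix.mul_assoc, hQ', Matrix.mul_one]
    simp only [← Matrix.mul_assoc, hP', Matrix.one_mul]
  rw [← frobenius_norm_unitary_mul (Unitary.star_mem hP), ← frobenius_norm_mul_unitary hQ, hconj,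
    frobenius_norm_sq_eq_sum]
  refine sum_congr rfl fun i _ ↦ sum_congr rfl fun j _ ↦ ?_
  rw [Matrix.sub_apply, diagonal_mul, mul_diagonal, mul_comm _ (δ j : 𝕜), ← sub_mul,
    ← RCLike.ofReal_sub, norm_mul, mul_pow, RCLike.norm_ofReal, sq_abs]

lemma le_two_mul_sqrt_div_mul {s N m x : ℝ} (hs : 0 ≤ s) (hsN : s ≤ N) (hm : 0 < m) (hx : 0 ≤ x)
    (hmx : m * s ≤ 4 * x ^ 2) : s ≤ 2 * √(N / m) * x := by
  have hN : 0 ≤ N := hs.trans hsN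
  refine (pow_le_pow_iff_left₀ hs (by positivity) two_ne_zero).1 ?_
  calc s ^ 2 ≤ N * s := by nlinarith
    _ = N / m * (m * s) := by field_simp
    _ ≤ N / m * (4 * x ^ 2) := by gcongr
    _ = (2 * √(N / m) * x) ^ 2 := by
      rw [mul_pow, mul_pow, Real.sq_sqrt (by positivity)]; ring

theorem eigenvector_stability_general {d δ : ι → ℝ} (hdδ : Monovary d δ)
    {A B P₀ Q : Matrix ι ι 𝕜} (hP₀ : P₀ ∈ unitaryGroup ι 𝕜) (hQ : Q ∈ unitaryGroup ι 𝕜)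
    (hA : A = P₀ * diagonal (fun i ↦ (d i : 𝕜)) * star P₀)
    (hB : B = Q * diagonal (fun i ↦ (δ i : 𝕜)) * star Q)
    {m : ℝ} (hm : 0 < m) (hgap : ∀ i j, d i ≠ d j → m ≤ (d i - d j) ^ 2) :
    ∃ P ∈ unitaryGroup ι 𝕜, A = P * diagonal (fun i ↦ (d i : 𝕜)) * star P ∧
      ‖P - Q‖ ^ 2 ≤ 4 * √(Fintype.card ι / m) * ‖A - B‖ := by
  let W := star P₀ * Q
  have hW : W ∈ unitaryGroup ι 𝕜 := mul_mem (Unitary.star_mem hP₀) hQ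
  have hmass : m * offBlockMass d W ≤ 4 * ‖A - B‖ ^ 2 := by
    rw [hA, hB, frobenius_norm_diagonalized_sub_sq hP₀ hQ]
    exact (mul_offBlockMass_le_sum hgap W).trans <|
      sum_sub_sq_mul_le_of_mem_doublyStochastic (map_norm_sq_mem_doublyStochastic hW) hdδ
  obtain ⟨R, hR, hRd, hRW⟩ := exists_unitary_commute_diagonal_norm_sub_sq_le d hW
  have hdist : ‖P₀ * R - Q‖ = ‖R - W‖ := by
    rw [← frobenius_norm_unitary_mul hP₀ (R - W), Matrix.mul_sub, ← Matrix.mul_assoc P₀ (star P₀),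
      mem_unitaryGroup_iff.1 hP₀, Matrix.one_mul]
  refine ⟨P₀ * R, mul_mem hP₀ hR, ?_, ?_⟩
  · rw [hA, star_mul, Matrix.mul_assoc P₀ R, hRd.eq]
    simp only [Matrix.mul_assoc]
    rw [← Matrix.mul_assoc R, mem_unitaryGroup_iff.1 hR, Matrix.one_mul]
  · rw [hdist]
    linarith [le_two_mul_sqrt_div_mul (offBlockMass_nonneg d W) (offBlockMass_le_card d hW) hm
      (norm_nonneg _) hmass]

lemma frobNorm_eq_norm {n : ℕ} (A : Matrix (Fin n) (Fin n) ℝ) : frobNorm A = ‖A‖ := by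
  simp [frobNorm, frobenius_norm_def, Real.sqrt_eq_rpow]

lemma mem_unitaryGroup_iff_mul_transpose_eq_one {P : Matrix ι ι ℝ} :
    P ∈ unitaryGroup ι ℝ ↔ P * Pᵀ = 1 := by
  rw [mem_unitaryGroup_iff, star_eq_conjTranspose, conjTranspose_eq_transpose_of_trivial]

end Stability

end

/-- continuity of eigenvectors. Let `Σ, Λ` be positive semidefinite with
increasingly ordered eigenvalue matrices `D, Δ`, `Σ` having at least two distinct eigenvalues,
and `m = min{(λ−μ)² : λ ≠ μ eigenvalues of Σ}`. Then for every orthogonal `Q` with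
`Λ = Q Δ Qᵀ`, there exists an orthogonal `P` with `Σ = P D Pᵀ` and
`‖P − Q‖_F² ≤ 4 √(n/m) ‖Σ − Λ‖_F`. -/
theorem eigenvector_stability (n : ℕ) (d δ : Fin n → ℝ)
    (hd0 : ∀ i, 0 ≤ d i) (hδ0 : ∀ i, 0 ≤ δ i)
    (hd : Monotone d) (hδ : Monotone δ)
    (Sig Lam P₀ Q : Matrix (Fin n) (Fin n) ℝ)
    (hP₀ : P₀ * P₀ᵀ = 1) (hSig : Sig = P₀ * Matrix.diagonal d * P₀ᵀ)
    (hQ : Q * Qᵀ = 1) (hLam : Lam = Q * Matrix.diagonal δ * Qᵀ)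
    (hdistinct : ∃ i j, d i ≠ d j)
    (m : ℝ) (hm : IsLeast {x : ℝ | ∃ i j : Fin n, d i ≠ d j ∧ x = (d i - d j) ^ 2} m) :
    ∃ P : Matrix (Fin n) (Fin n) ℝ, P * Pᵀ = 1 ∧ Sig = P * Matrix.diagonal d * Pᵀ ∧
      frobNorm (P - Q) ^ 2 ≤ 4 * Real.sqrt ((n : ℝ) / m) * frobNorm (Sig - Lam) := by
  have hm_pos : 0 < m := by
    obtain ⟨⟨i, j, hij, rfl⟩, -⟩ := hm
    exact sq_pos_of_ne_zero (sub_ne_zero.2 hij)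
  have hgap (i j : Fin n) (hij : d i ≠ d j) : m ≤ (d i - d j) ^ 2 := hm.2 ⟨i, j, hij, rfl⟩
  simpa [mem_unitaryGroup_iff_mul_transpose_eq_one, star_eq_conjTranspose, frobNorm_eq_norm] using
    eigenvector_stability_general (hd.monovary hδ)
      (mem_unitaryGroup_iff_mul_transpose_eq_one.2 hP₀)
      (mem_unitaryGroup_iff_mul_transpose_eq_one.2 hQ) hSig hLam hm_pos hgap
end

section
/- Let S be an n×n doubly stochastic matrix (S_{ij} ≥ 0, each row sums to 1, each column sums to 1) and let d₁ ≤ d₂ ≤ … ≤ d_n and δ₁ ≤ δ₂ ≤ … ≤ δ_n be real numbers sorted increasingly. Then Σ_{i,j} d_i S_{ij} δ_j ≤ Σ_i d_i δ_i; i.e. among doubly stochastic matrices S, the linear functional S ↦ Σ_{i,j} d_i S_{ij} δ_j is maximized at S = Iₙ. -/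
open Matrix Finset

/-!
By Birkhoff's theorem the doubly stochastic matrices are the convex hull of the permutation
matrices. The matrices `M` with `f ⬝ᵥ M *ᵥ g ≤ f ⬝ᵥ g` form a half-space, which contains every
permutation matrix by the classical rearrangement inequality, so it contains that hull.
-/

section

variable {R ι κ : Type*} [Fintype ι] [Fintype κ]

lemma convex_setOf_dotProduct_mulVec_le [CommSemiring R] [PartialOrder R] [IsOrderedRing R]
    (f : ι → R) (g : κ → R) (c : R) : Convex R {M : Matrix ι κ R | f ⬝ᵥ M *ᵥ g ≤ c} := by
  refine convex_halfSpace_le ⟨fun M N ↦ ?_, fun a M ↦ ?_⟩ c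
  · rw [add_mulVec, dotProduct_add]
  · rw [smul_mulVec, dotProduct_smul]

variable [DecidableEq ι]

lemma dotProduct_permMatrix_mulVec_le_of_monovary [CommRing R] [LinearOrder R]
    [IsStrictOrderedRing R] {f g : ι → R} (hfg : Monovary f g) (σ : Equiv.Perm ι) :
    f ⬝ᵥ σ.permMatrix R *ᵥ g ≤ f ⬝ᵥ g := by
  rw [permMatrix_mulVec]
  exact hfg.sum_mul_comp_perm_le_sum_mul

theorem doubly_stochastic_rearrangement_general [Field R] [LinearOrder R] [IsStrictOrderedRing R]
    {S : Matrix ι ι R} (hS : S ∈ doublyStochastic R ι) {f g : ι → R} (hfg : Monovary f g) :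
    f ⬝ᵥ S *ᵥ g ≤ f ⬝ᵥ g := by
  rw [← SetLike.mem_coe, doublyStochastic_eq_convexHull_permMatrix] at hS
  refine convexHull_min ?_ (convex_setOf_dotProduct_mulVec_le f g (f ⬝ᵥ g)) hS
  rintro _ ⟨σ, rfl⟩
  exact dotProduct_permMatrix_mulVec_le_of_monovary hfg σ

end

/-- among doubly stochastic matrices `S`, the functional
`S ↦ Σ_{i,j} d_i S_{ij} δ_j` with `d, δ` sorted increasingly is maximized at the identity:
`Σ_{i,j} d_i S_{ij} δ_j ≤ Σ_i d_i δ_i`. -/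
theorem doubly_stochastic_rearrangement (n : ℕ) (S : Matrix (Fin n) (Fin n) ℝ)
    (hS : ∀ i j, 0 ≤ S i j) (hrow : ∀ i, ∑ j, S i j = 1) (hcol : ∀ j, ∑ i, S i j = 1)
    (d δ : Fin n → ℝ) (hd : Monotone d) (hδ : Monotone δ) :
    ∑ i, ∑ j, d i * S i j * δ j ≤ ∑ i, d i * δ i := by
  simpa only [dotProduct, mulVec, mul_sum, mul_assoc] using doubly_stochastic_rearrangement_general
    (mem_doublyStochastic_iff_sum.2 ⟨hS, hrow, hcol⟩) (hd.monovary hδ)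
end

section
/- Let (g_Σ)_{Σ ∈ SPD(n)} be the O(n)-invariant family of inner products on Sym(n) determined by functions γ, α : (0,∞)ⁿ → (0,∞) and β : (0,∞)ⁿ → ℝ satisfying the compatibility, positivity and symmetry conditions, via g_D(X,X) = Σ_i γ(d_i, d_{k≠i}) X_{ii}² + Σ_{i≠j} α(d_i, d_j, d_{k≠i,j}) X_{ij}² + Σ_{i≠j} β(d_i, d_j, d_{k≠i,j}) X_{ii} X_{jj} at positive diagonal D and g_Σ(X,X) = g_D(PᵀXP, PᵀXP) for Σ = PDPᵀ. Then g is invariant under scaling — meaning g_{λΣ}(λX, λX) = g_Σ(X,X) for all λ > 0, Σ ∈ SPD(n), X ∈ Sym(n) — if and only if f(λx) = λ^{−2} f(x) for each f ∈ {α, β, γ}, all x ∈ (0,∞)ⁿ and all λ > 0. -/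
open Matrix Finset

/-- A vector in `ℝⁿ` is positive if all its entries are. -/
def PosVec {n : ℕ} (d : Fin n → ℝ) : Prop := ∀ i, 0 < d i

/-- The vector `(d_i, d_{k≠i})`: entries of `d` reordered so that `d i` comes first, the
remaining entries being the `d k` for `k ≠ i` (in some order). -/
def reord1 {n : ℕ} (hn : 2 ≤ n) (d : Fin n → ℝ) (i : Fin n) : Fin n → ℝ :=
  d ∘ (Equiv.swap (⟨0, by omega⟩ : Fin n) i)

/-- A permutation sending `0 ↦ i` and `1 ↦ j` (for `i ≠ j`). -/
def perm2 {n : ℕ} (hn : 2 ≤ n) (i j : Fin n) : Equiv.Perm (Fin n) :=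
  Equiv.swap (⟨0, by omega⟩ : Fin n) i *
    Equiv.swap (⟨1, by omega⟩ : Fin n) (Equiv.swap (⟨0, by omega⟩ : Fin n) i j)

/-- The vector `(d_i, d_j, d_{k≠i,j})`: entries of `d` reordered so that `d i, d j` come first,
the remaining entries being the `d k` for `k ≠ i,j` (in some order). -/
def reord2 {n : ℕ} (hn : 2 ≤ n) (d : Fin n → ℝ) (i j : Fin n) : Fin n → ℝ :=
  d ∘ (perm2 hn i j)

/-- `f` is `(1,n−1)`-symmetric: invariant under all permutations of its last `n−1` variables. -/
def Sym1n {n : ℕ} (hn : 2 ≤ n) (f : (Fin n → ℝ) → ℝ) : Prop :=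
  ∀ σ : Equiv.Perm (Fin n), σ ⟨0, by omega⟩ = (⟨0, by omega⟩ : Fin n) →
    ∀ d : Fin n → ℝ, PosVec d → f (d ∘ σ) = f d

/-- `f` is `(2,n−2)`-symmetric: invariant under all permutations of its first `2` variables and
of its last `n−2` variables. -/
def Sym2n {n : ℕ} (hn : 2 ≤ n) (f : (Fin n → ℝ) → ℝ) : Prop :=
  ∀ σ : Equiv.Perm (Fin n),
    ((σ ⟨0, by omega⟩ = (⟨0, by omega⟩ : Fin n) ∧ σ ⟨1, by omega⟩ = (⟨1, by omega⟩ : Fin n)) ∨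
     (σ ⟨0, by omega⟩ = (⟨1, by omega⟩ : Fin n) ∧ σ ⟨1, by omega⟩ = (⟨0, by omega⟩ : Fin n))) →
    ∀ d : Fin n → ℝ, PosVec d → f (d ∘ σ) = f d

/-- The symmetric matrix `S(d)` with `S_{ii}(d) = γ(d_i, d_{k≠i})` and
`S_{ij}(d) = β(d_i, d_j, d_{k≠i,j})` for `i ≠ j`. -/
def Smat {n : ℕ} (hn : 2 ≤ n) (γ β : (Fin n → ℝ) → ℝ) (d : Fin n → ℝ) :
    Matrix (Fin n) (Fin n) ℝ :=
  Matrix.of fun i j => if i = j then γ (reord1 hn d i) else β (reord2 hn d i j)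

/-- The compatibility condition: `γ = α + β` on `{d : d₁ = d₂}`. -/
def CompatCond {n : ℕ} (hn : 2 ≤ n) (γ α β : (Fin n → ℝ) → ℝ) : Prop :=
  ∀ d : Fin n → ℝ, PosVec d → d ⟨0, by omega⟩ = d ⟨1, by omega⟩ → γ d = α d + β d

/-- The positivity condition: `S(d)` is positive definite for every positive `d`. -/
def PositivityCond {n : ℕ} (hn : 2 ≤ n) (γ β : (Fin n → ℝ) → ℝ) : Prop :=
  ∀ d : Fin n → ℝ, PosVec d → (Smat hn γ β d).PosDef

/-- The bilinear form
`g_D(X,Y) = Σ_i γ(d_i,d_{k≠i}) X_{ii}Y_{ii} + Σ_{i≠j} α(d_i,d_j,d_{k≠i,j}) X_{ij}Y_{ij}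
 + Σ_{i≠j} β(d_i,d_j,d_{k≠i,j}) X_{ii}Y_{jj}` at the positive diagonal matrix `D = diag d`. -/
def gD {n : ℕ} (hn : 2 ≤ n) (γ α β : (Fin n → ℝ) → ℝ) (d : Fin n → ℝ)
    (X Y : Matrix (Fin n) (Fin n) ℝ) : ℝ :=
  (∑ i, γ (reord1 hn d i) * X i i * Y i i) +
  (∑ i, ∑ j, if i = j then 0 else α (reord2 hn d i j) * X i j * Y i j) +
  (∑ i, ∑ j, if i = j then 0 else β (reord2 hn d i j) * X i i * Y j j)

/-!
The coefficients `γ, α, β` are determined by the family `g`: on diagonal tangent vectors `g_D` is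
the quadratic form of `S(d)`, whose entries give `γ` and `β`, and on `E₁₂ + E₂₁` it equals `2 α(d)`.
For `λ > 0` the rescaled family `(Σ, X) ↦ g_{λΣ}(λX, λX)` is again `O(n)`-invariant, with
coefficients `λ² f(λ ·)` for `f ∈ {γ, α, β}`. Hence the two families agree if and only if the
coefficients do.
-/

lemma PosVec.comp {m n : ℕ} {d : Fin n → ℝ} (hd : PosVec d) (σ : Fin m → Fin n) :
    PosVec (d ∘ σ) :=
  fun i => hd (σ i)

lemma PosVec.smul {n : ℕ} {d : Fin n → ℝ} (hd : PosVec d) {l : ℝ} (hl : 0 < l) : PosVec (l • d) :=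
  fun i => mul_pos hl (hd i)

lemma posDef_exists_orthogonal_diagonalization {ι : Type*} [Fintype ι] [DecidableEq ι]
    {S : Matrix ι ι ℝ} (hS : S.PosDef) :
    ∃ (P : Matrix ι ι ℝ) (d : ι → ℝ),
      P * Pᵀ = 1 ∧ (∀ i, 0 < d i) ∧ S = P * diagonal d * Pᵀ := by
  refine ⟨hS.isHermitian.eigenvectorUnitary, hS.isHermitian.eigenvalues, ?_,
    hS.eigenvalues_pos, ?_⟩
  · simpa [star_eq_conjTranspose] using
      mem_unitaryGroup_iff.1 hS.isHermitian.eigenvectorUnitary.2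
  · simpa [Unitary.conjStarAlgAut_apply, star_eq_conjTranspose] using
      hS.isHermitian.spectral_theorem

lemma isSymm_single_add_single {ι R : Type*} [DecidableEq ι] [AddCommMonoid R] (i j : ι) (c : R) :
    (single i j c + single j i c).IsSymm := by
  rw [IsSymm, transpose_add, transpose_single, transpose_single, add_comm]

lemma dotProduct_mulVec_single_add_single {ι R : Type*} [Fintype ι] [DecidableEq ι]
    [NonAssocSemiring R] (A : Matrix ι ι R) (i j : ι) :
    (Pi.single i 1 + Pi.single j 1) ⬝ᵥ A *ᵥ (Pi.single i 1 + Pi.single j 1) =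
      A i i + A i j + (A j i + A j j) := by
  rw [add_dotProduct, mulVec_add, dotProduct_add, dotProduct_add]
  simp

section

variable {n : ℕ} (hn : 2 ≤ n)

/-- The index of the first variable `d₁`. -/
abbrev firstIdx : Fin n := ⟨0, by omega⟩

/-- The index of the second variable `d₂`. -/
abbrev secondIdx : Fin n := ⟨1, by omega⟩

/-- Invariance of a function on positive vectors under exchanging its first two variables. Since
`gD` only sees the sums `f(d₁, d₂, …) + f(d₂, d₁, …)` for `f = α, β`, this is what makes `α` and `β`
recoverable from it. -/
def SwapInvariant (f : (Fin n → ℝ) → ℝ) : Prop :=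
  ∀ d, PosVec d → f (d ∘ Equiv.swap (firstIdx hn) (secondIdx hn)) = f d

/-- The coefficient function `x ↦ l² f(l x)` that replaces `f` when `g_Σ(X, X)` is replaced by
`g_{lΣ}(lX, lX)`. -/
def rescale (l : ℝ) (f : (Fin n → ℝ) → ℝ) : (Fin n → ℝ) → ℝ :=
  fun x => l ^ 2 * f (l • x)

/-- `g` is the `O(n)`-invariant family of quadratic forms with coefficients `γ, α, β`: it extends
`gD` from diagonal base points along `Σ = P D Pᵀ`. Only its values on positive definite base points
and symmetric tangent vectors are constrained. -/
def IsOrthogonalExtension (γ α β : (Fin n → ℝ) → ℝ)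
    (g : Matrix (Fin n) (Fin n) ℝ → Matrix (Fin n) (Fin n) ℝ → ℝ) : Prop :=
  ∀ (P : Matrix (Fin n) (Fin n) ℝ) (d : Fin n → ℝ), P * Pᵀ = 1 → PosVec d →
    ∀ X : Matrix (Fin n) (Fin n) ℝ, X.IsSymm →
      g (P * diagonal d * Pᵀ) X = gD hn γ α β d (Pᵀ * X * P) (Pᵀ * X * P)

variable {hn} {γ α β γ' α' β' f : (Fin n → ℝ) → ℝ} {l : ℝ}

lemma Sym2n.swapInvariant (hf : Sym2n hn f) : SwapInvariant hn f :=
  hf _ (.inr ⟨Equiv.swap_apply_left .., Equiv.swap_apply_right ..⟩)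

lemma SwapInvariant.rescale (hf : SwapInvariant hn f) (hl : 0 < l) :
    SwapInvariant hn (rescale l f) :=
  fun d hd => congrArg (l ^ 2 * ·) (hf (l • d) (hd.smul hl))

lemma rescale_eq_iff (hl : 0 < l) (x : Fin n → ℝ) :
    rescale l f x = f x ↔ f (l • x) = (l ^ 2)⁻¹ * f x :=
  (eq_inv_mul_iff_mul_eq₀ (pow_ne_zero 2 hl.ne')).symm

lemma reord1_first (d : Fin n → ℝ) : reord1 hn d (firstIdx hn) = d := by
  simp [reord1]

lemma reord2_first_second (d : Fin n → ℝ) :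
    reord2 hn d (firstIdx hn) (secondIdx hn) = d := by
  simp [reord2, perm2]

lemma reord2_second_first (d : Fin n → ℝ) :
    reord2 hn d (secondIdx hn) (firstIdx hn) =
      d ∘ Equiv.swap (firstIdx hn) (secondIdx hn) := by
  simp [reord2, perm2]

lemma gD_diagonal (d u v : Fin n → ℝ) :
    gD hn γ α β d (diagonal u) (diagonal v) = u ⬝ᵥ Smat hn γ β d *ᵥ v := by
  have off_diagonal_zero (i j : Fin n) :
      (if i = j then 0 else α (reord2 hn d i j) * diagonal u i j * diagonal v i j) = 0 := by
    split_ifs with hij <;> simp [hij]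
  have diagonal_term (i : Fin n) : γ (reord1 hn d i) * u i * v i =
      ∑ j, if i = j then γ (reord1 hn d i) * u i * v j else 0 := by
    simp
  simp only [gD, off_diagonal_zero, diagonal_apply_eq, sum_const_zero, add_zero, diagonal_term,
    ← sum_add_distrib, dotProduct, mulVec, Smat, of_apply, mul_sum]
  refine sum_congr rfl fun i _ => sum_congr rfl fun j _ => ?_
  split_ifs <;> ring

lemma gD_diagonal_single (d : Fin n → ℝ) (i : Fin n) :
    gD hn γ α β d (diagonal (Pi.single i 1)) (diagonal (Pi.single i 1)) = γ (reord1 hn d i) := by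
  simp [gD_diagonal, Smat]

lemma gD_diagonal_first_second (hβ : SwapInvariant hn β) {d : Fin n → ℝ} (hd : PosVec d) :
    gD hn γ α β d (diagonal (Pi.single (firstIdx hn) 1 + Pi.single (secondIdx hn) 1))
      (diagonal (Pi.single (firstIdx hn) 1 + Pi.single (secondIdx hn) 1)) =
        γ d + γ (reord1 hn d (secondIdx hn)) + 2 * β d := by
  rw [gD_diagonal, dotProduct_mulVec_single_add_single]
  simp only [Smat, of_apply, if_true, Fin.mk.injEq, zero_ne_one, one_ne_zero, if_false,
    reord1_first, reord2_first_second, reord2_second_first, hβ d hd]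
  ring

lemma gD_single_add_single (d : Fin n → ℝ) {a b : Fin n} (hab : a ≠ b) :
    gD hn γ α β d (single a b 1 + single b a 1) (single a b 1 + single b a 1) =
      α (reord2 hn d a b) + α (reord2 hn d b a) := by
  have diagonal_zero (i : Fin n) :
      (single a b 1 + single b a 1 : Matrix (Fin n) (Fin n) ℝ) i i = 0 := by
    grind [Matrix.add_apply]
  have off_diagonal_term (i j : Fin n) :
      (if i = j then 0 else α (reord2 hn d i j) *
        (single a b 1 + single b a 1 : Matrix (Fin n) (Fin n) ℝ) i j *
        (single a b 1 + single b a 1 : Matrix (Fin n) (Fin n) ℝ) i j) =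
      (if i = a then if j = b then α (reord2 hn d a b) else 0 else 0) +
        (if i = b then if j = a then α (reord2 hn d b a) else 0 else 0) := by
    grind [Matrix.add_apply]
  simp only [gD, diagonal_zero, off_diagonal_term, sum_add_distrib]
  simp

lemma gD_single_first_second (hα : SwapInvariant hn α) {d : Fin n → ℝ} (hd : PosVec d) :
    gD hn γ α β d
      (single (firstIdx hn) (secondIdx hn) 1 + single (secondIdx hn) (firstIdx hn) 1)
      (single (firstIdx hn) (secondIdx hn) 1 + single (secondIdx hn) (firstIdx hn) 1) =
        2 * α d := by
  rw [gD_single_add_single d (by simp), reord2_first_second, reord2_second_first, hα d hd, two_mul]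

lemma gD_congr (h : ∀ x, PosVec x → α x = α' x ∧ β x = β' x ∧ γ x = γ' x)
    {d : Fin n → ℝ} (hd : PosVec d) (X Y : Matrix (Fin n) (Fin n) ℝ) :
    gD hn γ α β d X Y = gD hn γ' α' β' d X Y := by
  simp only [gD, reord1, reord2, (h _ (hd.comp _)).1, (h _ (hd.comp _)).2.1,
    (h _ (hd.comp _)).2.2]

lemma gD_eq_iff_coeff_eq (hα : SwapInvariant hn α) (hβ : SwapInvariant hn β)
    (hα' : SwapInvariant hn α') (hβ' : SwapInvariant hn β') :
    (∀ d, PosVec d → ∀ X : Matrix (Fin n) (Fin n) ℝ, X.IsSymm →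
      gD hn γ α β d X X = gD hn γ' α' β' d X X) ↔
    ∀ x, PosVec x → α x = α' x ∧ β x = β' x ∧ γ x = γ' x := by
  refine ⟨fun h => ?_, fun h d hd X _ => gD_congr h hd X X⟩
  have γ_eq (x : Fin n → ℝ) (hx : PosVec x) : γ x = γ' x := by
    simpa only [gD_diagonal_single, reord1_first] using
      h x hx _ (isSymm_diagonal (Pi.single (firstIdx hn) 1))
  intro x hx
  have α_eq := h x hx _ (isSymm_single_add_single (firstIdx hn) (secondIdx hn) 1)
  have β_eq := h x hx _
    (isSymm_diagonal (Pi.single (firstIdx hn) 1 + Pi.single (secondIdx hn) 1))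
  rw [gD_single_first_second hα hx, gD_single_first_second hα' hx] at α_eq
  rw [gD_diagonal_first_second hβ hx, gD_diagonal_first_second hβ' hx, γ_eq x hx,
    γ_eq (reord1 hn x (secondIdx hn)) (hx.comp _)] at β_eq
  exact ⟨by linarith, by linarith, γ_eq x hx⟩

lemma gD_smul_smul (l : ℝ) (d : Fin n → ℝ) (X Y : Matrix (Fin n) (Fin n) ℝ) :
    gD hn γ α β (l • d) (l • X) (l • Y) =
      gD hn (rescale l γ) (rescale l α) (rescale l β) d X Y := by
  have reord1_smul (i : Fin n) : reord1 hn (l • d) i = l • reord1 hn d i := rfl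
  have reord2_smul (i j : Fin n) : reord2 hn (l • d) i j = l • reord2 hn d i j := rfl
  have smul_term (c x y : ℝ) : c * (l * x) * (l * y) = l ^ 2 * c * x * y := by ring
  simp only [gD, rescale, reord1_smul, reord2_smul, Matrix.smul_apply, smul_eq_mul, smul_term]

namespace IsOrthogonalExtension

variable {g g' : Matrix (Fin n) (Fin n) ℝ → Matrix (Fin n) (Fin n) ℝ → ℝ}

lemma apply_diagonal (hg : IsOrthogonalExtension hn γ α β g) {d : Fin n → ℝ} (hd : PosVec d)
    {X : Matrix (Fin n) (Fin n) ℝ} (hX : X.IsSymm) :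
    g (diagonal d) X = gD hn γ α β d X X := by
  simpa using hg 1 d (by simp) hd X hX

lemma rescale (hg : IsOrthogonalExtension hn γ α β g) (hl : 0 < l) :
    IsOrthogonalExtension hn (rescale l γ) (rescale l α) (rescale l β)
      fun S X => g (l • S) (l • X) := by
  intro P d hP hd X hX
  beta_reduce
  have smul_conj : l • (P * diagonal d * Pᵀ) = P * diagonal (l • d) * Pᵀ := by
    rw [diagonal_smul, Matrix.mul_smul, Matrix.smul_mul]
  rw [smul_conj, hg P _ hP (hd.smul hl) _ (hX.smul l), Matrix.mul_smul, Matrix.smul_mul,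
    gD_smul_smul]

lemma eq_iff_gD_eq (hg : IsOrthogonalExtension hn γ α β g)
    (hg' : IsOrthogonalExtension hn γ' α' β' g') :
    (∀ S : Matrix (Fin n) (Fin n) ℝ, S.PosDef → ∀ X : Matrix (Fin n) (Fin n) ℝ, X.IsSymm →
      g S X = g' S X) ↔
    ∀ d, PosVec d → ∀ X : Matrix (Fin n) (Fin n) ℝ, X.IsSymm →
      gD hn γ α β d X X = gD hn γ' α' β' d X X := by
  constructor
  · intro h d hd X hX
    rw [← hg.apply_diagonal hd hX, ← hg'.apply_diagonal hd hX, h _ (PosDef.diagonal hd) X hX]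
  · intro h S hS X hX
    obtain ⟨P, d, hP, hd, rfl⟩ := posDef_exists_orthogonal_diagonalization hS
    have hPX : (Pᵀ * X * P).IsSymm := by
      simp [IsSymm, transpose_mul, hX.eq, Matrix.mul_assoc]
    rw [hg P d hP hd X hX, hg' P d hP hd X hX, h d hd _ hPX]

end IsOrthogonalExtension

end

theorem o_n_invariant_metric_scaling_invariance_general (n : ℕ) (hn : 2 ≤ n)
    (γ α β : (Fin n → ℝ) → ℝ) (hα : SwapInvariant hn α) (hβ : SwapInvariant hn β)
    (g : Matrix (Fin n) (Fin n) ℝ → Matrix (Fin n) (Fin n) ℝ → ℝ)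
    (hg : IsOrthogonalExtension hn γ α β g) :
    (∀ lam : ℝ, 0 < lam → ∀ Sig : Matrix (Fin n) (Fin n) ℝ, Sig.PosDef →
      ∀ X : Matrix (Fin n) (Fin n) ℝ, X.IsSymm → g (lam • Sig) (lam • X) = g Sig X) ↔
    (∀ x : Fin n → ℝ, PosVec x → ∀ lam : ℝ, 0 < lam →
      α (lam • x) = (lam ^ 2)⁻¹ * α x ∧
      β (lam • x) = (lam ^ 2)⁻¹ * β x ∧
      γ (lam • x) = (lam ^ 2)⁻¹ * γ x) := by
  have invariant_iff (lam : ℝ) (hlam : 0 < lam) :=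
    ((hg.rescale hlam).eq_iff_gD_eq hg).trans
      (gD_eq_iff_coeff_eq (hα.rescale hlam) (hβ.rescale hlam) hα hβ)
  constructor
  · intro h x hx lam hlam
    simpa only [rescale_eq_iff hlam] using (invariant_iff lam hlam).1 (h lam hlam) x hx
  · intro h lam hlam
    refine (invariant_iff lam hlam).2 fun x hx => ?_
    simpa only [rescale_eq_iff hlam] using h x hx lam hlam

/-- the `O(n)`-invariant metric `g` determined by `γ, α, β` is invariant under
scaling (`g_{λΣ}(λX,λX) = g_Σ(X,X)` for all `λ > 0`) iff `f(λx) = λ⁻² f(x)` for each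
`f ∈ {α, β, γ}`, all positive `x` and all `λ > 0`. -/
theorem o_n_invariant_metric_scaling_invariance (n : ℕ) (hn : 2 ≤ n)
    (γ α β : (Fin n → ℝ) → ℝ)
    (hγpos : ∀ d, PosVec d → 0 < γ d) (hαpos : ∀ d, PosVec d → 0 < α d)
    (hcompat : CompatCond hn γ α β) (hposS : PositivityCond hn γ β)
    (hγsym : Sym1n hn γ) (hαsym : Sym2n hn α) (hβsym : Sym2n hn β)
    (g : Matrix (Fin n) (Fin n) ℝ → Matrix (Fin n) (Fin n) ℝ → ℝ)
    (hg : ∀ (P : Matrix (Fin n) (Fin n) ℝ) (d : Fin n → ℝ), P * Pᵀ = 1 → PosVec d →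
      ∀ X : Matrix (Fin n) (Fin n) ℝ, X.IsSymm →
        g (P * Matrix.diagonal d * Pᵀ) X = gD hn γ α β d (Pᵀ * X * P) (Pᵀ * X * P)) :
    (∀ lam : ℝ, 0 < lam → ∀ Sig : Matrix (Fin n) (Fin n) ℝ, Sig.PosDef →
      ∀ X : Matrix (Fin n) (Fin n) ℝ, X.IsSymm → g (lam • Sig) (lam • X) = g Sig X) ↔
    (∀ x : Fin n → ℝ, PosVec x → ∀ lam : ℝ, 0 < lam →
      α (lam • x) = (lam ^ 2)⁻¹ * α x ∧
      β (lam • x) = (lam ^ 2)⁻¹ * β x ∧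
      γ (lam • x) = (lam ^ 2)⁻¹ * γ x) := by
  exact o_n_invariant_metric_scaling_invariance_general n hn γ α β hαsym.swapInvariant
    hβsym.swapInvariant g hg
end

section
/- Let x, y ∈ ℝⁿ and let Δ be a positive diagonal n×n matrix. Then the symmetric matrix S = Δ(Iₙ + ½(xyᵀ + yxᵀ))Δ is positive definite if and only if ‖x‖·‖y‖ − ⟨x,y⟩ < 2 (where ⟨·,·⟩ and ‖·‖ are the Euclidean inner product and norm on ℝⁿ). Equivalently, the nonzero eigenvalues of xyᵀ + yxᵀ are ⟨x,y⟩ + ‖x‖‖y‖ and ⟨x,y⟩ − ‖x‖‖y‖, and Iₙ + ½(xyᵀ + yxᵀ) is positive definite precisely under this condition. -/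
open Matrix Finset

/-- Euclidean inner product on `ℝⁿ`. -/
def dotR {n : ℕ} (x y : Fin n → ℝ) : ℝ := ∑ i, x i * y i

/-- Euclidean norm on `ℝⁿ`. -/
noncomputable def nrmR {n : ℕ} (x : Fin n → ℝ) : ℝ := Real.sqrt (dotR x x)

/-!
The matrix `M = xyᵀ + yxᵀ` acts by `M v = ⟨y, v⟩ x + ⟨x, v⟩ y`. Pairing `M v = μ v` with `x` and `y`
gives a `2 × 2` linear system for `(⟨x, v⟩, ⟨y, v⟩)`: either both coordinates vanish, and then
`μ = 0`, or its determinant `(μ - ⟨x, y⟩)² - ‖x‖² ‖y‖²` does. Conversely `‖y‖ x ± ‖x‖ y` is an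
eigenvector for `⟨x, y⟩ ± ‖x‖ ‖y‖` when this number is nonzero. Hence the eigenvalues of `I + ½ M`
are all positive exactly when `1 + ½ (⟨x, y⟩ - ‖x‖ ‖y‖)` is, and an invertible congruence preserves
positive definiteness.
-/

section Hermitian

open scoped ComplexOrder

variable {ι 𝕜 : Type*} [Fintype ι] [RCLike 𝕜] {A : Matrix ι ι 𝕜}

theorem posDef_iff_forall_mulVec_eq_smul_pos (hA : A.IsHermitian) :
    A.PosDef ↔ ∀ (μ : ℝ) (v : ι → 𝕜), v ≠ 0 → A *ᵥ v = μ • v → 0 < μ := by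
  classical
  refine ⟨fun hpos μ v hv hμ => ?_, fun h => hA.posDef_iff_eigenvalues_pos.2 fun i => ?_⟩
  · have hμv : 0 < μ • (star v ⬝ᵥ v) := by
      simpa only [hμ, dotProduct_smul] using hpos.dotProduct_mulVec_pos hv
    exact pos_of_smul_pos_right hμv (dotProduct_star_self_nonneg v)
  · refine h _ _ (fun h0 => ?_) (hA.mulVec_eigenvectorBasis i)
    exact hA.eigenvectorBasis.orthonormal.ne_zero i (WithLp.ofLp_injective 2 h0)

theorem posDef_one_add_smul_iff [DecidableEq ι] (hA : A.IsHermitian) {a : ℝ} (ha : a ≠ 0) :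
    (1 + a • A).PosDef ↔
      ∀ (μ : ℝ) (v : ι → 𝕜), v ≠ 0 → A *ᵥ v = μ • v → 0 < 1 + a * μ := by
  have hshift (v : ι → 𝕜) : (1 + a • A) *ᵥ v = v + a • A *ᵥ v := by
    rw [add_mulVec, one_mulVec, smul_mulVec]
  rw [posDef_iff_forall_mulVec_eq_smul_pos (isHermitian_one.add (hA.smul (.all a)))]
  refine ⟨fun h μ v hv hμ => h _ v hv ?_, fun h μ v hv hμ => ?_⟩
  · rw [hshift, hμ]
    module
  · have hAv : A *ᵥ v = (a⁻¹ * (μ - 1)) • v := by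
      rw [mul_smul, eq_inv_smul_iff₀ ha, sub_smul, one_smul, ← hμ, hshift, add_sub_cancel_left]
    simpa only [mul_inv_cancel_left₀ ha, add_sub_cancel] using h _ v hv hAv

end Hermitian

/-- The symmetrized outer product `xyᵀ + yxᵀ`, over an arbitrary coefficient ring. -/
def symmOuter {ι R : Type*} [Add R] [Mul R] (x y : ι → R) : Matrix ι ι R :=
  vecMulVec x y + vecMulVec y x

section SymmOuter

variable {ι R : Type*}

theorem symmOuter_isSymm [CommSemiring R] (x y : ι → R) : (symmOuter x y).IsSymm := by
  rw [IsSymm, symmOuter, transpose_add, transpose_vecMulVec, transpose_vecMulVec, add_comm]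

variable [Fintype ι]

theorem symmOuter_mulVec [CommSemiring R] (x y v : ι → R) :
    symmOuter x y *ᵥ v = (y ⬝ᵥ v) • x + (x ⬝ᵥ v) • y := by
  simp only [symmOuter, add_mulVec, vecMulVec_mulVec, op_smul_eq_smul]

variable [CommRing R]

theorem symmOuter_mulVec_smul_add_smul {x y : ι → R} {p q : R} (hp : p * p = x ⬝ᵥ x)
    (hq : q * q = y ⬝ᵥ y) :
    symmOuter x y *ᵥ (q • x + p • y) = (x ⬝ᵥ y + p * q) • (q • x + p • y) := by
  simp only [symmOuter_mulVec, dotProduct_add, dotProduct_smul, ← hp, ← hq, dotProduct_comm y x,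
    smul_eq_mul]
  module

variable [NoZeroDivisors R]

theorem eq_zero_or_sq_eq_of_symmOuter_mulVec {x y v : ι → R} {μ : R} (hv : v ≠ 0)
    (h : symmOuter x y *ᵥ v = μ • v) :
    μ = 0 ∨ (μ - x ⬝ᵥ y) ^ 2 = (x ⬝ᵥ x) * (y ⬝ᵥ y) := by
  rw [symmOuter_mulVec] at h
  have hx := congrArg (x ⬝ᵥ ·) h
  have hy := congrArg (y ⬝ᵥ ·) h
  simp only [dotProduct_add, dotProduct_smul, dotProduct_comm y x, smul_eq_mul] at hx hy
  have hdet_x : ((μ - x ⬝ᵥ y) ^ 2 - (x ⬝ᵥ x) * (y ⬝ᵥ y)) * (x ⬝ᵥ v) = 0 := by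
    linear_combination -(μ - x ⬝ᵥ y) * hx - (x ⬝ᵥ x) * hy
  have hdet_y : ((μ - x ⬝ᵥ y) ^ 2 - (x ⬝ᵥ x) * (y ⬝ᵥ y)) * (y ⬝ᵥ v) = 0 := by
    linear_combination -(μ - x ⬝ᵥ y) * hy - (y ⬝ᵥ y) * hx
  refine or_iff_not_imp_right.2 fun hdet => ?_
  have hxv := (mul_eq_zero.1 hdet_x).resolve_left (sub_ne_zero.2 hdet)
  have hyv := (mul_eq_zero.1 hdet_y).resolve_left (sub_ne_zero.2 hdet)
  rw [hxv, hyv, zero_smul, zero_smul, add_zero] at h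
  exact (smul_eq_zero.1 h.symm).resolve_right hv

theorem exists_symmOuter_mulVec_eq_smul {x y : ι → R} {p q : R} (hp : p * p = x ⬝ᵥ x)
    (hq : q * q = y ⬝ᵥ y) (hμ : x ⬝ᵥ y + p * q ≠ 0) :
    ∃ v, v ≠ 0 ∧ symmOuter x y *ᵥ v = (x ⬝ᵥ y + p * q) • v := by
  by_cases hv : q • x + p • y = 0
  · -- The vector `q • x + p • y` vanishes only if `p = q = 0`; then `x` itself is an eigenvector.
    have hx : p * (x ⬝ᵥ y + p * q) = 0 := by
      have := congrArg (x ⬝ᵥ ·) hv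
      simp only [dotProduct_add, dotProduct_smul, ← hp, smul_eq_mul, dotProduct_zero] at this
      linear_combination this
    have hy : q * (x ⬝ᵥ y + p * q) = 0 := by
      have := congrArg (y ⬝ᵥ ·) hv
      simp only [dotProduct_add, dotProduct_smul, ← hq, dotProduct_comm y x, smul_eq_mul,
        dotProduct_zero] at this
      linear_combination this
    obtain rfl := (mul_eq_zero.1 hx).resolve_right hμ
    obtain rfl := (mul_eq_zero.1 hy).resolve_right hμ
    refine ⟨x, ?_, ?_⟩
    · rintro rfl
      simp at hμ
    · rw [symmOuter_mulVec, ← hp, dotProduct_comm y x, mul_zero, zero_smul, add_zero, add_zero]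
  · exact ⟨_, hv, symmOuter_mulVec_smul_add_smul hp hq⟩

end SymmOuter

section Real

variable {ι : Type*} [Fintype ι]

theorem sqrt_dotProduct_mul_self (x : ι → ℝ) : √(x ⬝ᵥ x) * √(x ⬝ᵥ x) = x ⬝ᵥ x :=
  Real.mul_self_sqrt (dotProduct_star_self_nonneg x)

theorem eq_zero_or_eq_add_or_eq_sub_of_symmOuter_mulVec {x y v : ι → ℝ} {μ : ℝ} (hv : v ≠ 0)
    (h : symmOuter x y *ᵥ v = μ • v) :
    μ = 0 ∨ μ = x ⬝ᵥ y + √(x ⬝ᵥ x) * √(y ⬝ᵥ y) ∨ μ = x ⬝ᵥ y - √(x ⬝ᵥ x) * √(y ⬝ᵥ y) := by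
  refine (eq_zero_or_sq_eq_of_symmOuter_mulVec hv h).imp_right fun hsq => ?_
  have hsq' : (μ - x ⬝ᵥ y) ^ 2 = (√(x ⬝ᵥ x) * √(y ⬝ᵥ y)) ^ 2 := by
    rw [hsq, sq, mul_mul_mul_comm, sqrt_dotProduct_mul_self, sqrt_dotProduct_mul_self]
  exact (sq_eq_sq_iff_eq_or_eq_neg.1 hsq').imp sub_eq_iff_eq_add'.1 sub_eq_iff_eq_add'.1

theorem exists_symmOuter_mulVec_eq_add_smul {x y : ι → ℝ}
    (hμ : x ⬝ᵥ y + √(x ⬝ᵥ x) * √(y ⬝ᵥ y) ≠ 0) :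
    ∃ v, v ≠ 0 ∧ symmOuter x y *ᵥ v = (x ⬝ᵥ y + √(x ⬝ᵥ x) * √(y ⬝ᵥ y)) • v :=
  exists_symmOuter_mulVec_eq_smul (sqrt_dotProduct_mul_self x) (sqrt_dotProduct_mul_self y) hμ

theorem exists_symmOuter_mulVec_eq_sub_smul {x y : ι → ℝ}
    (hμ : x ⬝ᵥ y - √(x ⬝ᵥ x) * √(y ⬝ᵥ y) ≠ 0) :
    ∃ v, v ≠ 0 ∧ symmOuter x y *ᵥ v = (x ⬝ᵥ y - √(x ⬝ᵥ x) * √(y ⬝ᵥ y)) • v := by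
  rw [sub_eq_add_neg, ← neg_mul] at hμ ⊢
  refine exists_symmOuter_mulVec_eq_smul ?_ (sqrt_dotProduct_mul_self y) hμ
  rw [neg_mul_neg, sqrt_dotProduct_mul_self]

variable [DecidableEq ι]

theorem posDef_one_add_smul_symmOuter_iff (x y : ι → ℝ) {a : ℝ} (ha : 0 < a) :
    (1 + a • symmOuter x y).PosDef ↔ a * (√(x ⬝ᵥ x) * √(y ⬝ᵥ y) - x ⬝ᵥ y) < 1 := by
  have hherm : (symmOuter x y).IsHermitian :=
    (conjTranspose_eq_transpose_of_trivial _).trans (symmOuter_isSymm x y)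
  rw [posDef_one_add_smul_iff hherm ha.ne']
  constructor
  · intro hpos
    by_cases hμ : x ⬝ᵥ y - √(x ⬝ᵥ x) * √(y ⬝ᵥ y) = 0
    · rw [← neg_sub, hμ, neg_zero, mul_zero]
      exact one_pos
    · obtain ⟨v, hv, hMv⟩ := exists_symmOuter_mulVec_eq_sub_smul hμ
      linarith [hpos _ v hv hMv]
  · intro hlt μ v hv hMv
    have hnorm : 0 ≤ a * (√(x ⬝ᵥ x) * √(y ⬝ᵥ y)) := by positivity
    rcases eq_zero_or_eq_add_or_eq_sub_of_symmOuter_mulVec hv hMv with rfl | rfl | rfl <;> linarith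

theorem separable_trace_term_posdef_iff_general (x y : ι → ℝ) {P : Matrix ι ι ℝ}
    (hP : IsUnit P) :
    ((Pᵀ * (1 + (1 / 2 : ℝ) • symmOuter x y) * P).PosDef ↔
      √(x ⬝ᵥ x) * √(y ⬝ᵥ y) - x ⬝ᵥ y < 2) ∧
    ((1 + (1 / 2 : ℝ) • symmOuter x y).PosDef ↔ √(x ⬝ᵥ x) * √(y ⬝ᵥ y) - x ⬝ᵥ y < 2) ∧
    (∀ μ : ℝ, (∃ v : ι → ℝ, v ≠ 0 ∧ symmOuter x y *ᵥ v = μ • v) →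
      μ = 0 ∨ μ = x ⬝ᵥ y + √(x ⬝ᵥ x) * √(y ⬝ᵥ y) ∨ μ = x ⬝ᵥ y - √(x ⬝ᵥ x) * √(y ⬝ᵥ y)) ∧
    (x ⬝ᵥ y + √(x ⬝ᵥ x) * √(y ⬝ᵥ y) ≠ 0 →
      ∃ v : ι → ℝ, v ≠ 0 ∧ symmOuter x y *ᵥ v = (x ⬝ᵥ y + √(x ⬝ᵥ x) * √(y ⬝ᵥ y)) • v) ∧
    (x ⬝ᵥ y - √(x ⬝ᵥ x) * √(y ⬝ᵥ y) ≠ 0 →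
      ∃ v : ι → ℝ, v ≠ 0 ∧ symmOuter x y *ᵥ v = (x ⬝ᵥ y - √(x ⬝ᵥ x) * √(y ⬝ᵥ y)) • v) := by
  have hposDef : (1 + (1 / 2 : ℝ) • symmOuter x y).PosDef ↔
      √(x ⬝ᵥ x) * √(y ⬝ᵥ y) - x ⬝ᵥ y < 2 := by
    rw [posDef_one_add_smul_symmOuter_iff x y one_half_pos, one_div_mul_eq_div,
      div_lt_one two_pos]
  refine ⟨?_, hposDef, fun μ ⟨v, hv, hMv⟩ => eq_zero_or_eq_add_or_eq_sub_of_symmOuter_mulVec hv hMv,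
    exists_symmOuter_mulVec_eq_add_smul, exists_symmOuter_mulVec_eq_sub_smul⟩
  rw [← conjTranspose_eq_transpose_of_trivial, ← star_eq_conjTranspose,
    IsUnit.posDef_star_left_conjugate_iff hP, hposDef]

end Real

/-- `S = Δ(Iₙ + ½(xyᵀ + yxᵀ))Δ` is positive definite iff
`‖x‖‖y‖ − ⟨x,y⟩ < 2`; equivalently, the nonzero eigenvalues of `M = xyᵀ + yxᵀ` are
`⟨x,y⟩ ± ‖x‖‖y‖` and `Iₙ + ½M` is positive definite precisely under this condition. -/
theorem separable_trace_term_posdef_iff (n : ℕ) (x y t : Fin n → ℝ) (ht : ∀ i, 0 < t i)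
    (M S : Matrix (Fin n) (Fin n) ℝ)
    (hM : M = Matrix.vecMulVec x y + Matrix.vecMulVec y x)
    (hS : S = Matrix.diagonal t * (1 + (1 / 2 : ℝ) • M) * Matrix.diagonal t) :
    (S.PosDef ↔ nrmR x * nrmR y - dotR x y < 2) ∧
    ((1 + (1 / 2 : ℝ) • M).PosDef ↔ nrmR x * nrmR y - dotR x y < 2) ∧
    (∀ μ : ℝ, (∃ v : Fin n → ℝ, v ≠ 0 ∧ M *ᵥ v = μ • v) →
      μ = 0 ∨ μ = dotR x y + nrmR x * nrmR y ∨ μ = dotR x y - nrmR x * nrmR y) ∧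
    (dotR x y + nrmR x * nrmR y ≠ 0 →
      ∃ v : Fin n → ℝ, v ≠ 0 ∧ M *ᵥ v = (dotR x y + nrmR x * nrmR y) • v) ∧
    (dotR x y - nrmR x * nrmR y ≠ 0 →
      ∃ v : Fin n → ℝ, v ≠ 0 ∧ M *ᵥ v = (dotR x y - nrmR x * nrmR y) • v) := by
  subst hM hS
  have hΔ : IsUnit (diagonal t) :=
    isUnit_diagonal.2 (Pi.isUnit_iff.2 fun i => (ht i).ne'.isUnit)
  have h := separable_trace_term_posdef_iff_general x y hΔ
  rwa [diagonal_transpose] at h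
end

section
/- Let x, y ∈ ℝⁿ with ‖x‖·‖y‖ − ⟨x,y⟩ < 2, let Δ be a positive diagonal n×n matrix, and set S = Δ(Iₙ + ½(xyᵀ + yxᵀ))Δ and c = 1 + ⟨x,y⟩ − ¼(‖x‖²‖y‖² − ⟨x,y⟩²). Then c > 0, S is invertible, and S⁻¹ = Δ⁻¹[Iₙ − (1/(4c))(2 + ⟨x,y⟩)(xyᵀ + yxᵀ) + (1/(4c))(‖y‖² xxᵀ + ‖x‖² yyᵀ)]Δ⁻¹. -/
open Matrix Finset

/-!
Put `N = xyᵀ + yxᵀ` and `W = ‖y‖² xxᵀ + ‖x‖² yyᵀ`. Then `N² = ⟨x,y⟩ N + W` and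
`N W = ‖x‖²‖y‖² N + ⟨x,y⟩ W`, so the inverse of `1 + a N` can be sought in the span of `1`, `N` and
`W`; comparing coefficients gives it with denominator `δ = (1 + a⟨x,y⟩)² - a²‖x‖²‖y‖²`. For
`a = 1/2` this is the constant `c`, a difference of squares that is positive because
`‖x‖‖y‖ < 2 + ⟨x,y⟩`.
-/

variable {ι R K : Type*}

section Outer

variable [CommRing R]

/-- The symmetric outer product `xyᵀ + yxᵀ`, i.e. the rank-two perturbation of the identity in `S`,
without its factor `½`. -/
def symOuter (x y : ι → R) : Matrix ι ι R :=
  vecMulVec x y + vecMulVec y x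

variable [Fintype ι]

/-- The matrix `‖y‖² xxᵀ + ‖x‖² yyᵀ` of the second correction term in `S⁻¹`. The squared norms are
written as dot products, so that it makes sense over any commutative ring. -/
def weightedOuter (x y : ι → R) : Matrix ι ι R :=
  (y ⬝ᵥ y) • vecMulVec x x + (x ⬝ᵥ x) • vecMulVec y y

theorem symOuter_mul_self (x y : ι → R) :
    symOuter x y * symOuter x y = (x ⬝ᵥ y) • symOuter x y + weightedOuter x y := by
  simp only [symOuter, weightedOuter, add_mul, mul_add, vecMulVec_mul_vecMulVec, vecMulVec_smul,
    dotProduct_comm y x]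
  module

theorem symOuter_mul_weightedOuter (x y : ι → R) :
    symOuter x y * weightedOuter x y =
      ((x ⬝ᵥ x) * (y ⬝ᵥ y)) • symOuter x y + (x ⬝ᵥ y) • weightedOuter x y := by
  simp only [symOuter, weightedOuter, add_mul, mul_add, mul_smul_comm, vecMulVec_mul_vecMulVec,
    vecMulVec_smul, dotProduct_comm y x]
  module

theorem one_add_smul_symOuter_mul [DecidableEq ι] (a : R) (x y : ι → R) {δ : R}
    (hδ : δ = (1 + a * (x ⬝ᵥ y)) ^ 2 - a ^ 2 * ((x ⬝ᵥ x) * (y ⬝ᵥ y))) :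
    (1 + a • symOuter x y) *
        (δ • 1 - (a * (1 + a * (x ⬝ᵥ y))) • symOuter x y + a ^ 2 • weightedOuter x y) =
      δ • 1 := by
  simp only [add_mul, mul_add, mul_sub, one_mul, mul_one, smul_mul_assoc, mul_smul_comm,
    symOuter_mul_self, symOuter_mul_weightedOuter, hδ]
  module

end Outer

theorem one_add_smul_symOuter_mul_eq_one [Field K] [Fintype ι] [DecidableEq ι] (a : K)
    (x y : ι → K) {δ : K} (hδ : δ = (1 + a * (x ⬝ᵥ y)) ^ 2 - a ^ 2 * ((x ⬝ᵥ x) * (y ⬝ᵥ y)))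
    (hδ₀ : δ ≠ 0) :
    (1 + a • symOuter x y) *
        (1 - (δ⁻¹ * (a * (1 + a * (x ⬝ᵥ y)))) • symOuter x y
          + (δ⁻¹ * a ^ 2) • weightedOuter x y) = 1 := by
  have hscaled := congrArg (δ⁻¹ • ·) (one_add_smul_symOuter_mul a x y hδ)
  simpa only [← mul_smul_comm δ⁻¹, smul_add, smul_sub, smul_smul, inv_mul_cancel₀ hδ₀, one_smul]
    using hscaled

theorem sq_sub_sq_mul_pos_of_abs_mul_sqrt_lt {a u v w : ℝ} (hu : 0 ≤ u) (hv : 0 ≤ v)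
    (h : |a| * (√u * √v) < w) : 0 < w ^ 2 - a ^ 2 * (u * v) := by
  have hsq : (|a| * (√u * √v)) ^ 2 = a ^ 2 * (u * v) := by
    rw [mul_pow, mul_pow, sq_abs, Real.sq_sqrt hu, Real.sq_sqrt hv]
  rw [sub_pos, ← hsq]
  exact pow_lt_pow_left₀ h (by positivity) two_ne_zero

theorem separable_trace_term_inverse_general [Fintype ι] [DecidableEq ι] (x y : ι → ℝ)
    (Δ : Matrix ι ι ℝ) (hΔ : IsUnit Δ.det) (h : √(x ⬝ᵥ x) * √(y ⬝ᵥ y) - x ⬝ᵥ y < 2) (c : ℝ)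
    (hc : c = 1 + x ⬝ᵥ y - (1 / 4) * ((x ⬝ᵥ x) * (y ⬝ᵥ y) - (x ⬝ᵥ y) ^ 2)) :
    0 < c ∧ IsUnit (Δ * (1 + (1 / 2 : ℝ) • symOuter x y) * Δ).det ∧
    (Δ * (1 + (1 / 2 : ℝ) • symOuter x y) * Δ)⁻¹ =
      Δ⁻¹ * (1 - ((1 / (4 * c)) * (2 + x ⬝ᵥ y)) • symOuter x y
        + (1 / (4 * c)) • weightedOuter x y) * Δ⁻¹ := by
  have hc_sq : c = (1 + 1 / 2 * (x ⬝ᵥ y)) ^ 2 - (1 / 2) ^ 2 * ((x ⬝ᵥ x) * (y ⬝ᵥ y)) := by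
    rw [hc]; ring
  have hc_pos : 0 < c := by
    rw [hc_sq]
    refine sq_sub_sq_mul_pos_of_abs_mul_sqrt_lt (dotProduct_self_star_nonneg x)
      (dotProduct_self_star_nonneg y) ?_
    rw [abs_of_pos one_half_pos]
    linarith
  have hright : (1 + (1 / 2 : ℝ) • symOuter x y) *
      (1 - ((1 / (4 * c)) * (2 + x ⬝ᵥ y)) • symOuter x y
        + (1 / (4 * c)) • weightedOuter x y) = 1 := by
    have hcoeff_sym : 1 / (4 * c) * (2 + x ⬝ᵥ y) = c⁻¹ * (1 / 2 * (1 + 1 / 2 * (x ⬝ᵥ y))) := by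
      field_simp
      ring
    have hcoeff_weighted : 1 / (4 * c) = c⁻¹ * (1 / 2) ^ 2 := by
      field_simp
      norm_num
    rw [hcoeff_sym, hcoeff_weighted]
    exact one_add_smul_symOuter_mul_eq_one (1 / 2) x y hc_sq hc_pos.ne'
  refine ⟨hc_pos, ?_, ?_⟩
  · rw [det_mul, det_mul]
    exact (hΔ.mul (isUnit_det_of_right_inverse hright)).mul hΔ
  · rw [Matrix.mul_inv_rev, Matrix.mul_inv_rev, inv_eq_right_inv hright, Matrix.mul_assoc]

/-- inverse of the bivariate separable matrix `S = Δ(Iₙ + ½(xyᵀ + yxᵀ))Δ`: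
with `c = 1 + ⟨x,y⟩ − ¼(‖x‖²‖y‖² − ⟨x,y⟩²)` one has `c > 0`, `S` is invertible, and
`S⁻¹ = Δ⁻¹[Iₙ − (2+⟨x,y⟩)/(4c)·(xyᵀ+yxᵀ) + 1/(4c)·(‖y‖²xxᵀ + ‖x‖²yyᵀ)]Δ⁻¹`. -/
theorem separable_trace_term_inverse (n : ℕ) (x y t : Fin n → ℝ) (ht : ∀ i, 0 < t i)
    (h2 : nrmR x * nrmR y - dotR x y < 2)
    (S : Matrix (Fin n) (Fin n) ℝ)
    (hS : S = Matrix.diagonal t *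
      (1 + (1 / 2 : ℝ) • (Matrix.vecMulVec x y + Matrix.vecMulVec y x)) * Matrix.diagonal t)
    (c : ℝ) (hc : c = 1 + dotR x y - (1 / 4) * (dotR x x * dotR y y - dotR x y ^ 2)) :
    0 < c ∧ IsUnit S.det ∧
    S⁻¹ = (Matrix.diagonal t)⁻¹ *
      (1 - ((1 / (4 * c)) * (2 + dotR x y)) • (Matrix.vecMulVec x y + Matrix.vecMulVec y x)
        + (1 / (4 * c)) • (dotR y y • Matrix.vecMulVec x x + dotR x x • Matrix.vecMulVec y y)) *
      (Matrix.diagonal t)⁻¹ := by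
  have hdet : IsUnit (diagonal t).det := (isUnit_iff_isUnit_det _).1 <|
    isUnit_diagonal.2 <| Pi.isUnit_iff.2 fun i => (ht i).ne'.isUnit
  exact hS ▸ separable_trace_term_inverse_general x y (diagonal t) hdet h2 c hc
end

section
/- Let D = diag(d₁,…,d_n) and Δ = diag(δ₁,…,δ_n) be positive diagonal n×n matrices and X ∈ Sym(n). For t ∈ [0,1] let γ(t) = ((1−t)√D + t√Δ)², so γ(t) is the positive diagonal matrix with entries γ_i(t) = ((1−t)√d_i + t√δ_i)². Define the symmetric-matrix-valued curve X(t) by X(t)_{ij} = √((γ_i(t) + γ_j(t))/(d_i + d_j))·X_{ij}, let X⁰(t) be the symmetric matrix with entries X⁰(t)_{ij} = X(t)_{ij}/(γ_i(t) + γ_j(t)) (so X(t) = γ(t)X⁰(t) + X⁰(t)γ(t)), and let γ̇⁰(t) = ½·γ̇(t)·γ(t)⁻¹. Then X(0) = X, X(1)_{ij} = √((δ_i + δ_j)/(d_i + d_j))·X_{ij}, and for all t ∈ [0,1] the curve satisfies the Bures–Wasserstein parallel-transport equation Ẋ(t) = γ̇⁰(t)γ(t)X⁰(t) + X⁰(t)γ(t)γ̇⁰(t),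 i.e. Ẋ(t) − (γ̇⁰(t)γ(t)X⁰(t) + X⁰(t)γ(t)γ̇⁰(t)) = 0. (This is the geodesic parallel transport of the Bures–Wasserstein metric from D to Δ along the Bures–Wasserstein geodesic γ between the commuting matrices D and Δ.) -/
open Matrix Finset

/-!
On diagonal matrices the Lyapunov equation decouples: `γ X⁰ + X⁰ γ = X` reads
`(γ_i + γ_j) X⁰_{ij} = X_{ij}`. Likewise `γ̇⁰ γ = γ γ̇⁰ = γ̇ / 2`, so the transport equation becomes
the scalar equation `Ẋ_{ij} = (γ̇_i + γ̇_j) / (2 (γ_i + γ_j)) X_{ij}` in each entry, which is solved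
by `√(γ_i + γ_j)` up to a constant. This holds along every differentiable curve of positive diagonal
matrices; the geodesic only enters through its endpoints and its positivity.
-/

section Geodesic

/-- The Bures–Wasserstein geodesic from `a` to `b` in dimension one. On commuting, simultaneously
diagonalized matrices the geodesic is given by this formula in each eigenvalue. -/
noncomputable def bwGeodesic (a b s : ℝ) : ℝ :=
  ((1 - s) * √a + s * √b) ^ 2

variable {a b : ℝ}

theorem bwGeodesic_zero (b : ℝ) (ha : 0 ≤ a) : bwGeodesic a b 0 = a := by
  simp [bwGeodesic, Real.sq_sqrt ha]

theorem bwGeodesic_one (a : ℝ) (hb : 0 ≤ b) : bwGeodesic a b 1 = b := by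
  simp [bwGeodesic, Real.sq_sqrt hb]

theorem bwGeodesic_pos (ha : 0 < a) (hb : 0 < b) {s : ℝ} (hs : s ∈ Set.Icc (0 : ℝ) 1) :
    0 < bwGeodesic a b s := by
  have hsegment : (1 - s) * √a + s * √b ∈ Set.Ioi (0 : ℝ) :=
    convex_Ioi 0 (Real.sqrt_pos.2 ha) (Real.sqrt_pos.2 hb) (sub_nonneg.2 hs.2) hs.1
      (sub_add_cancel 1 s)
  exact pow_pos hsegment 2

theorem hasDerivAt_bwGeodesic (a b s : ℝ) :
    HasDerivAt (bwGeodesic a b) (2 * ((1 - s) * √a + s * √b) * (√b - √a)) s := by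
  have hsegment : HasDerivAt (fun u : ℝ => (1 - u) * √a + u * √b) (√b - √a) s :=
    ((((hasDerivAt_id s).const_sub 1).mul_const √a).add
      ((hasDerivAt_id s).mul_const √b)).congr_deriv (by ring)
  exact (hsegment.fun_pow 2).congr_deriv (by simp)

end Geodesic

section Lyapunov

variable {ι K : Type*} [Field K]

/-- The solution `Z` of the Lyapunov equation `diagonal c * Z + Z * diagonal c = Y`, written `Y⁰`
in the formula for the Bures–Wasserstein connection at `diagonal c`. It is meaningful only where
the sums `c i + c j` are nonzero; the other entries are `0`. -/
def diagLyapunov (c : ι → K) (Y : Matrix ι ι K) : Matrix ι ι K :=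
  of fun i j => Y i j / (c i + c j)

variable [DecidableEq ι]

theorem diagLyapunov_diagonal (c v : ι → K) :
    diagLyapunov c (diagonal v) = diagonal fun i => v i / 2 / c i := by
  ext i j
  obtain rfl | hij := eq_or_ne i j
  · simp only [diagLyapunov, of_apply, diagonal_apply_eq, ← two_mul, div_mul_eq_div_div]
  · simp only [diagLyapunov, of_apply, diagonal_apply_ne _ hij, zero_div]

variable [Fintype ι]

theorem diagonal_mul_diagLyapunov_add {c : ι → K} (hc : ∀ i j, c i + c j ≠ 0) (Y : Matrix ι ι K) :
    diagonal c * diagLyapunov c Y + diagLyapunov c Y * diagonal c = Y := by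
  ext i j
  rw [Matrix.add_apply, diagonal_mul, mul_diagonal, mul_comm _ (c j), ← add_mul]
  exact mul_div_cancel₀ (Y i j) (hc i j)

theorem half_smul_diagonal_mul_inv_diagonal {c : ι → K} (hc : ∀ i, c i ≠ 0) (v : ι → K) :
    (1 / 2 : K) • (diagonal v * (diagonal c)⁻¹) = diagLyapunov c (diagonal v) := by
  have hinv : (diagonal c)⁻¹ = diagonal fun i => (c i)⁻¹ :=
    inv_eq_left_inv (by simp [diagonal_mul_diagonal, hc])
  rw [hinv, diagonal_mul_diagonal, ← diagonal_smul, diagLyapunov_diagonal]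
  congr 1
  ext i
  simp only [Pi.smul_apply, smul_eq_mul]
  ring

theorem diagLyapunov_diagonal_mul_mul_add_apply {c : ι → K} (hc : ∀ i, c i ≠ 0) (v : ι → K)
    (Z : Matrix ι ι K) (i j : ι) :
    (diagLyapunov c (diagonal v) * diagonal c * Z +
      Z * diagonal c * diagLyapunov c (diagonal v)) i j = (v i + v j) / 2 * Z i j := by
  rw [diagLyapunov_diagonal, Matrix.add_apply, diagonal_mul_diagonal, diagonal_mul,
    mul_diagonal, mul_diagonal, div_mul_cancel₀ _ (hc i), mul_assoc, mul_div_cancel₀ _ (hc j)]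
  ring

end Lyapunov

section Transport

/-- Bures–Wasserstein parallel transport of `X` from the base point `diagonal d` to `diagonal c`
along a curve of positive diagonal matrices. -/
noncomputable def bwTransport {ι : Type*} (d c : ι → ℝ) (X : Matrix ι ι ℝ) : Matrix ι ι ℝ :=
  of fun i j => √((c i + c j) / (d i + d j)) * X i j

theorem bwTransport_self {ι : Type*} {d : ι → ℝ} (hd : ∀ i j, d i + d j ≠ 0) (X : Matrix ι ι ℝ) :
    bwTransport d d X = X := by
  ext i j
  simp [bwTransport, div_self (hd i j)]

theorem hasDerivAt_sqrt_div_const {f : ℝ → ℝ} {f' k t : ℝ} (hf : HasDerivAt f f' t)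
    (hft : f t ≠ 0) (hk : k ≠ 0) :
    HasDerivAt (fun u => √(f u / k)) (f' / 2 * (√(f t / k) / f t)) t := by
  refine ((hf.div_const k).sqrt (div_ne_zero hft hk)).congr_deriv ?_
  calc f' / k / (2 * √(f t / k))
      = f' / k / 2 * (√(f t / k))⁻¹ := by ring
    _ = f' / k / 2 * (√(f t / k) / (f t / k)) := by rw [Real.sqrt_div_self]
    _ = f' / 2 * (√(f t / k) / f t) := by field_simp

theorem hasDerivAt_bwTransport_apply {ι : Type*} {d v : ι → ℝ} {c : ℝ → ι → ℝ} {t : ℝ} {i j : ι}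
    (hci : HasDerivAt (c · i) (v i) t) (hcj : HasDerivAt (c · j) (v j) t)
    (hct : c t i + c t j ≠ 0) (hd : d i + d j ≠ 0) (X : Matrix ι ι ℝ) :
    HasDerivAt (fun u => bwTransport d (c u) X i j)
      ((v i + v j) / 2 * diagLyapunov (c t) (bwTransport d (c t) X) i j) t := by
  refine ((hasDerivAt_sqrt_div_const (hci.add hcj) hct hd).mul_const (X i j)).congr_deriv ?_
  simp only [bwTransport, diagLyapunov, of_apply, Pi.add_apply]
  ring

theorem hasDerivAt_bwTransport_parallel {ι : Type*} [Fintype ι] [DecidableEq ι] {d v : ι → ℝ}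
    {c : ℝ → ι → ℝ} {t : ℝ} (hc : ∀ i, HasDerivAt (c · i) (v i) t) (hct : ∀ i j, c t i + c t j ≠ 0)
    (hd : ∀ i j, d i + d j ≠ 0) (X : Matrix ι ι ℝ) (i j : ι) :
    HasDerivAt (fun u => bwTransport d (c u) X i j)
      ((diagLyapunov (c t) (diagonal v) * diagonal (c t) *
          diagLyapunov (c t) (bwTransport d (c t) X) +
        diagLyapunov (c t) (bwTransport d (c t) X) * diagonal (c t) *
          diagLyapunov (c t) (diagonal v)) i j) t := by
  have hct_ne (i : ι) : c t i ≠ 0 := fun h => hct i i (by rw [h, add_zero])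
  rw [diagLyapunov_diagonal_mul_mul_add_apply hct_ne]
  exact hasDerivAt_bwTransport_apply (hc i) (hc j) (hct i j) (hd i j) X

end Transport

theorem bures_wasserstein_parallel_transport_commuting_general {ι : Type*} [Fintype ι]
    [DecidableEq ι] (d δ : ι → ℝ) (hd : ∀ i, 0 < d i) (hδ : ∀ i, 0 < δ i) (X : Matrix ι ι ℝ)
    (γf : ι → ℝ → ℝ)
    (hγf : ∀ i s, γf i s = ((1 - s) * Real.sqrt (d i) + s * Real.sqrt (δ i)) ^ 2)
    (γ : ℝ → Matrix ι ι ℝ) (hγ : ∀ s, γ s = Matrix.diagonal (fun i => γf i s))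
    (Xc : ℝ → Matrix ι ι ℝ)
    (hXc : ∀ s i j, Xc s i j = Real.sqrt ((γf i s + γf j s) / (d i + d j)) * X i j)
    (X0 : ℝ → Matrix ι ι ℝ)
    (hX0 : ∀ s i j, X0 s i j = Xc s i j / (γf i s + γf j s))
    (γd : ℝ → Matrix ι ι ℝ)
    (hγd : ∀ s, γd s = Matrix.diagonal (fun i =>
      2 * ((1 - s) * Real.sqrt (d i) + s * Real.sqrt (δ i)) *
        (Real.sqrt (δ i) - Real.sqrt (d i))))
    (γd0 : ℝ → Matrix ι ι ℝ)
    (hγd0 : ∀ s, γd0 s = (1 / 2 : ℝ) • (γd s * (γ s)⁻¹)) :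
    (Xc 0 = X) ∧
    (∀ i j, Xc 1 i j = Real.sqrt ((δ i + δ j) / (d i + d j)) * X i j) ∧
    (∀ i, ∀ s : ℝ, HasDerivAt (γf i)
      (2 * ((1 - s) * Real.sqrt (d i) + s * Real.sqrt (δ i)) *
        (Real.sqrt (δ i) - Real.sqrt (d i))) s) ∧
    (∀ s ∈ Set.Icc (0 : ℝ) 1, Xc s = γ s * X0 s + X0 s * γ s) ∧
    (∀ s ∈ Set.Icc (0 : ℝ) 1, ∀ i j,
      HasDerivAt (fun u => Xc u i j)
        ((γd0 s * γ s * X0 s + X0 s * γ s * γd0 s) i j) s) := by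
  obtain rfl : γf = fun i => bwGeodesic (d i) (δ i) := funext₂ hγf
  obtain rfl : Xc = fun s => bwTransport d (fun i => bwGeodesic (d i) (δ i) s) X :=
    funext fun s => Matrix.ext (hXc s)
  have hX0_eq (s : ℝ) : X0 s = diagLyapunov (fun i => bwGeodesic (d i) (δ i) s) _ :=
    Matrix.ext (hX0 s)
  have hd_add (i j : ι) : d i + d j ≠ 0 := (add_pos (hd i) (hd j)).ne'
  have hγ_pos {s : ℝ} (hs : s ∈ Set.Icc (0 : ℝ) 1) (i : ι) : 0 < bwGeodesic (d i) (δ i) s :=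
    bwGeodesic_pos (hd i) (hδ i) hs
  have hγ_add {s : ℝ} (hs : s ∈ Set.Icc (0 : ℝ) 1) (i j : ι) :
      bwGeodesic (d i) (δ i) s + bwGeodesic (d j) (δ j) s ≠ 0 :=
    (add_pos (hγ_pos hs i) (hγ_pos hs j)).ne'
  refine ⟨?_, fun i j => ?_, fun i => hasDerivAt_bwGeodesic (d i) (δ i), fun s hs => ?_,
    fun s hs i j => ?_⟩
  · simp only [bwGeodesic_zero _ (hd _).le, bwTransport_self hd_add]
  · simp only [bwGeodesic_one _ (hδ _).le, bwTransport, of_apply]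
  · rw [hγ, hX0_eq]
    exact (diagonal_mul_diagLyapunov_add (hγ_add hs) _).symm
  · rw [hγd0, hγd, hγ, hX0_eq,
      half_smul_diagonal_mul_inv_diagonal fun i => (hγ_pos hs i).ne']
    exact hasDerivAt_bwTransport_parallel (fun i => hasDerivAt_bwGeodesic (d i) (δ i) s) (hγ_add hs)
      hd_add X i j

/-- geodesic parallel transport of the Bures–Wasserstein metric between the
commuting matrices `D = diag d` and `Δ = diag δ` along the Bures–Wasserstein geodesic
`γ(t) = ((1−t)√D + t√Δ)²`: the field `X(t)_{ij} = √((γ_i(t)+γ_j(t))/(d_i+d_j)) X_{ij}`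
satisfies `X(0) = X`, `X(1)_{ij} = √((δ_i+δ_j)/(d_i+d_j)) X_{ij}`, `X(t) = γX⁰ + X⁰γ`,
and the parallel-transport equation `Ẋ = γ̇⁰γX⁰ + X⁰γγ̇⁰` on `[0,1]`,
where `γ̇⁰(t) = ½ γ̇(t) γ(t)⁻¹`. -/
theorem bures_wasserstein_parallel_transport_commuting (n : ℕ) (d δ : Fin n → ℝ)
    (hd : ∀ i, 0 < d i) (hδ : ∀ i, 0 < δ i)
    (X : Matrix (Fin n) (Fin n) ℝ) (hX : X.IsSymm)
    (γf : Fin n → ℝ → ℝ)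
    (hγf : ∀ i s, γf i s = ((1 - s) * Real.sqrt (d i) + s * Real.sqrt (δ i)) ^ 2)
    (γ : ℝ → Matrix (Fin n) (Fin n) ℝ) (hγ : ∀ s, γ s = Matrix.diagonal (fun i => γf i s))
    (Xc : ℝ → Matrix (Fin n) (Fin n) ℝ)
    (hXc : ∀ s i j, Xc s i j = Real.sqrt ((γf i s + γf j s) / (d i + d j)) * X i j)
    (X0 : ℝ → Matrix (Fin n) (Fin n) ℝ)
    (hX0 : ∀ s i j, X0 s i j = Xc s i j / (γf i s + γf j s))
    (γd : ℝ → Matrix (Fin n) (Fin n) ℝ)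
    (hγd : ∀ s, γd s = Matrix.diagonal (fun i =>
      2 * ((1 - s) * Real.sqrt (d i) + s * Real.sqrt (δ i)) *
        (Real.sqrt (δ i) - Real.sqrt (d i))))
    (γd0 : ℝ → Matrix (Fin n) (Fin n) ℝ)
    (hγd0 : ∀ s, γd0 s = (1 / 2 : ℝ) • (γd s * (γ s)⁻¹)) :
    (Xc 0 = X) ∧
    (∀ i j, Xc 1 i j = Real.sqrt ((δ i + δ j) / (d i + d j)) * X i j) ∧
    (∀ i, ∀ s : ℝ, HasDerivAt (γf i)
      (2 * ((1 - s) * Real.sqrt (d i) + s * Real.sqrt (δ i)) *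
        (Real.sqrt (δ i) - Real.sqrt (d i))) s) ∧
    (∀ s ∈ Set.Icc (0 : ℝ) 1, Xc s = γ s * X0 s + X0 s * γ s) ∧
    (∀ s ∈ Set.Icc (0 : ℝ) 1, ∀ i j,
      HasDerivAt (fun u => Xc u i j)
        ((γd0 s * γ s * X0 s + X0 s * γ s * γd0 s) i j) s) :=
  bures_wasserstein_parallel_transport_commuting_general d δ hd hδ X γf hγf γ hγ Xc hXc X0 hX0
    γd hγd γd0 hγd0
end
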